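/- arXiv:1209.1578 — 5 statements merged into one kernel-verified Lean document; each statement's English description precedes it below -/
import Mathlib

section
/- Let m, p be positive integers and let α be a p×m complex matrix and β an m×p complex matrix, viewed as linear maps α : ℂ^m → ℂ^p and β : ℂ^p → ℂ^m. Consider the action of SL(m,ℂ) given by α ↦ α g⁻¹, β ↦ g β. Then the orbit of (α, β) is a closed subset of the product of the two matrix spaces (with the standard topology) if and only if (1) α is injective, or (2) β is surjective, or (3) ℂ^m is the internal direct sum of ker α and the range of β (i.e., ker α ∩ range β = 0 and ker α + range β = ℂ^m). -/
/-!
The action preserves `α * β`, the kernel of `β` and the row kernel of `α`, and `(α, β) ↦ (βᵀ, αᵀ)`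
exchanges the two sides.

If `α` is not injective and `β` is not surjective, choose `u ≠ 0` in `ker α` and `ψ ≠ 0` vanishing
on `range β`. When `ψ ⬝ᵥ u = 0`, multiplying `u` by `t` and dividing a vector `v` with `ψ ⬝ᵥ v = 1`
by `t` is a path in `SL` along which `(α, β)` converges as `t → 0`; if `u ∈ range β`, the limit
acquires a larger kernel and so lies outside the orbit. Hence a closed orbit forces
`ker α ∩ range β = 0`, and dually `ker βᵀ ∩ range αᵀ = 0`; in terms of ranks,
`rank (α * β) = rank β = rank α`, which says that `ker α` and `range β` are complementary.

Conversely, if `β` has a right inverse `r`, then `g = (g * β) * r` can be read off from a point of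
the orbit, which makes the orbit the solution set of polynomial equations. If `ker α` and `range β`
are complementary and `ker α ≠ 0`, the orbit is the closed set of pairs with the same product as
`(α, β)` and at least the kernel of `β` and the row kernel of `α`: such a pair again has
complementary kernel and range, so it is related to `(α, β)` by an invertible matrix, whose
determinant can be corrected by rescaling a vector of `ker α`.
-/

open Matrix Topology Filter

section LinearAlgebra

variable {K : Type*} [Field K]

section LinearMap

variable {V X Y : Type*} [AddCommGroup V] [Module K V] [AddCommGroup X] [Module K X]
  [AddCommGroup Y] [Module K Y]

lemma range_eq_range_comp_of_codisjoint {a : V →ₗ[K] Y} {b : X →ₗ[K] V}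
    (h : Codisjoint (LinearMap.ker a) (LinearMap.range b)) :
    LinearMap.range a = LinearMap.range (a ∘ₗ b) := by
  rw [LinearMap.range_comp, ← Submodule.map_top, ← h.eq_top, Submodule.map_sup,
    (LinearMap.le_ker_iff_map (f := a)).1 le_rfl, bot_sup_eq]

lemma exists_linearEquiv_range_prod_ker {a : V →ₗ[K] Y} {b : X →ₗ[K] V}
    (h : IsCompl (LinearMap.ker a) (LinearMap.range b)) :
    ∃ P : V ≃ₗ[K] LinearMap.range a × LinearMap.ker a,
      (∀ v, ((P v).1 : Y) = a v) ∧ ∀ x, (P (b x)).2 = 0 := by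
  refine ⟨LinearMap.equivProdOfSurjectiveOfIsCompl a.rangeRestrict
    ((LinearMap.ker a).projectionOnto (LinearMap.range b) h) a.range_rangeRestrict
    (Submodule.range_projectionOnto h) ?_, fun v => rfl, fun x => ?_⟩
  · rwa [LinearMap.ker_rangeRestrict, Submodule.ker_projectionOnto]
  · exact Submodule.projectionOnto_apply_of_mem_right h (LinearMap.mem_range_self b x)

lemma exists_linearEquiv_of_comp_eq_comp [FiniteDimensional K V] {a a' : V →ₗ[K] Y}
    {b b' : X →ₗ[K] V} (h : IsCompl (LinearMap.ker a) (LinearMap.range b))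
    (h' : IsCompl (LinearMap.ker a') (LinearMap.range b')) (hab : a' ∘ₗ b' = a ∘ₗ b) :
    ∃ e : V ≃ₗ[K] V, a' ∘ₗ e = a ∧ e ∘ₗ b = b' := by
  have hrange : LinearMap.range a = LinearMap.range a' := by
    rw [range_eq_range_comp_of_codisjoint h.codisjoint,
      range_eq_range_comp_of_codisjoint h'.codisjoint, hab]
  have hker : Module.finrank K (LinearMap.ker a) = Module.finrank K (LinearMap.ker a') := by
    have := a.finrank_range_add_finrank_ker
    have := a'.finrank_range_add_finrank_ker
    rw [hrange] at *
    omega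
  obtain ⟨P, hP, hPb⟩ := exists_linearEquiv_range_prod_ker h
  obtain ⟨P', hP', hPb'⟩ := exists_linearEquiv_range_prod_ker h'
  let e : V ≃ₗ[K] V := P ≪≫ₗ
    (LinearEquiv.ofEq _ _ hrange).prodCongr (LinearEquiv.ofFinrankEq _ _ hker) ≪≫ₗ P'.symm
  have he (v : V) : a' (e v) = a v := by simp [e, ← hP', ← hP]
  refine ⟨e, LinearMap.ext he, LinearMap.ext fun x => P'.injective (Prod.ext ?_ ?_)⟩
  · exact Subtype.ext <| by simpa [hP', he] using (LinearMap.congr_fun hab x).symm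
  · simp [e, hPb, hPb']

end LinearMap

variable {n ι κ : Type*} [Fintype n] [Fintype ι]

lemma disjoint_ker_range_mulVecLin_iff (α : Matrix κ n K) (β : Matrix n ι K) :
    Disjoint (LinearMap.ker α.mulVecLin) (LinearMap.range β.mulVecLin) ↔
      (α * β).rank = β.rank := by
  have hrank : (α * β).rank + Module.finrank K
      (LinearMap.ker (α.mulVecLin.domRestrict (LinearMap.range β.mulVecLin))) = β.rank := by
    rw [rank, mulVecLin_mul, LinearMap.range_comp, ← LinearMap.range_domRestrict]
    exact LinearMap.finrank_range_add_finrank_ker _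
  rw [disjoint_comm, Submodule.disjoint_iff_comap_eq_bot, ← LinearMap.ker_domRestrict,
    ← Submodule.finrank_eq_zero]
  omega

lemma isCompl_ker_range_mulVecLin_iff (α : Matrix κ n K) (β : Matrix n ι K) :
    IsCompl (LinearMap.ker α.mulVecLin) (LinearMap.range β.mulVecLin) ↔
      (α * β).rank = β.rank ∧ (α * β).rank = α.rank := by
  rw [← disjoint_ker_range_mulVecLin_iff]
  have hα : α.rank + Module.finrank K (LinearMap.ker α.mulVecLin) = Module.finrank K (n → K) :=
    α.mulVecLin.finrank_range_add_finrank_ker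
  constructor
  · intro h
    have hdim : Module.finrank K (LinearMap.ker α.mulVecLin) + β.rank = Module.finrank K (n → K) :=
      Submodule.finrank_add_eq_of_isCompl h
    have := (disjoint_ker_range_mulVecLin_iff α β).1 h.disjoint
    exact ⟨h.disjoint, by omega⟩
  · rintro ⟨hdisj, hrank⟩
    have := (disjoint_ker_range_mulVecLin_iff α β).1 hdisj
    refine (Submodule.isCompl_iff_disjoint _ _ ?_).2 hdisj
    change _ ≤ _ + β.rank
    omega

lemma rank_le_rank_of_ker_le {A B : Matrix κ n K}
    (h : LinearMap.ker B.mulVecLin ≤ LinearMap.ker A.mulVecLin) : A.rank ≤ B.rank := by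
  have hA : A.rank + _ = _ := A.mulVecLin.finrank_range_add_finrank_ker
  have hB : B.rank + _ = _ := B.mulVecLin.finrank_range_add_finrank_ker
  have := Submodule.finrank_mono h
  omega

lemma isCompl_ker_range_of_mul_eq_of_ker_le [Fintype κ] {α α' : Matrix κ n K}
    {β β' : Matrix n ι K} (h : IsCompl (LinearMap.ker α.mulVecLin) (LinearMap.range β.mulVecLin))
    (hmul : α' * β' = α * β)
    (hβ : LinearMap.ker β.mulVecLin ≤ LinearMap.ker β'.mulVecLin)
    (hα : LinearMap.ker αᵀ.mulVecLin ≤ LinearMap.ker α'ᵀ.mulVecLin) :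
    IsCompl (LinearMap.ker α'.mulVecLin) (LinearMap.range β'.mulVecLin) := by
  rw [isCompl_ker_range_mulVecLin_iff] at h ⊢
  have hrankα : α'.rank ≤ α.rank := by simpa only [rank_transpose] using rank_le_rank_of_ker_le hα
  have hrankβ := rank_le_rank_of_ker_le hβ
  have := rank_mul_le_left α' β'
  have := rank_mul_le_right α' β'
  rw [hmul] at *
  omega

lemma surjective_mulVecLin_transpose_iff [Fintype κ] (A : Matrix κ n K) :
    Function.Surjective Aᵀ.mulVecLin ↔ Function.Injective A.mulVecLin := by
  have hA : A.rank + Module.finrank K (LinearMap.ker A.mulVecLin) = Module.finrank K (n → K) :=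
    A.mulVecLin.finrank_range_add_finrank_ker
  rw [← LinearMap.range_eq_top, Submodule.eq_top_iff_finrank_eq, ← LinearMap.ker_eq_bot,
    ← Submodule.finrank_eq_zero]
  change Aᵀ.rank = _ ↔ _
  rw [rank_transpose]
  omega

lemma exists_vecMul_eq_zero_of_notMem_range {β : Matrix n ι K} {v : n → K}
    (hv : v ∉ LinearMap.range β.mulVecLin) : ∃ ψ : n → K, ψ ᵥ* β = 0 ∧ ψ ⬝ᵥ v = 1 := by
  classical
  obtain ⟨f, hfv, hf⟩ := Submodule.exists_le_ker_of_notMem hv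
  obtain ⟨ψ, rfl⟩ := (dotProductEquiv K n).surjective f
  refine ⟨(ψ ⬝ᵥ v)⁻¹ • ψ, ?_, ?_⟩
  · have hψβ : ψ ᵥ* β = 0 := dotProduct_eq_zero _ fun x => by
      rw [← dotProduct_mulVec]
      exact hf (LinearMap.mem_range_self β.mulVecLin x)
    rw [smul_vecMul, hψβ, smul_zero]
  · rw [smul_dotProduct, smul_eq_mul]
    exact inv_mul_cancel₀ hfv

lemma exists_dotProduct_eq_one {u : n → K} (hu : u ≠ 0) : ∃ φ : n → K, φ ⬝ᵥ u = 1 := by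
  classical
  obtain ⟨i, hi⟩ := Function.ne_iff.1 hu
  exact ⟨Pi.single i (u i)⁻¹, by rw [single_dotProduct, inv_mul_cancel₀ hi]⟩

end LinearAlgebra

section AxisScaling

variable {R n ι κ : Type*} [CommRing R] [DecidableEq n]

/-- The endomorphism `w ↦ w + (c - 1) (φ ⬝ᵥ w) u`. When `φ ⬝ᵥ u = 1` it multiplies `u` by `c` and
fixes the hyperplane `φ ⬝ᵥ w = 0`, and `c ↦ axisScaling u φ c` is a one-parameter group. -/
def axisScaling (u φ : n → R) (c : R) : Matrix n n R := 1 + (c - 1) • vecMulVec u φ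

lemma axisScaling_one (u φ : n → R) : axisScaling u φ 1 = 1 := by
  rw [axisScaling, sub_self, zero_smul, add_zero]

@[fun_prop]
lemma continuous_axisScaling [TopologicalSpace R] [IsTopologicalRing R] (u φ : n → R) :
    Continuous (axisScaling u φ) := by
  unfold axisScaling
  fun_prop

variable [Fintype n]

lemma axisScaling_mulVec (u φ : n → R) (c : R) (w : n → R) :
    axisScaling u φ c *ᵥ w = w + ((c - 1) * (φ ⬝ᵥ w)) • u := by
  rw [axisScaling, add_mulVec, one_mulVec, smul_mulVec, vecMulVec_mulVec, op_smul_eq_smul,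
    smul_smul]

lemma det_axisScaling {u φ : n → R} (h : φ ⬝ᵥ u = 1) (c : R) : (axisScaling u φ c).det = c := by
  rw [axisScaling, ← smul_vecMulVec, vecMulVec_eq Unit, det_one_add_replicateCol_mul_replicateRow,
    dotProduct_smul, h, smul_eq_mul, mul_one, add_sub_cancel]

lemma axisScaling_mul_axisScaling {u φ : n → R} (h : φ ⬝ᵥ u = 1) (c d : R) :
    axisScaling u φ c * axisScaling u φ d = axisScaling u φ (c * d) := by
  simp only [axisScaling, mul_add, add_mul, one_mul, mul_one, smul_mul_assoc, mul_smul_comm,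
    vecMulVec_mul_vecMulVec, h, one_smul]
  module

lemma mul_axisScaling_of_mulVec_eq_zero {A : Matrix κ n R} {u : n → R} (h : A *ᵥ u = 0)
    (φ : n → R) (c : R) : A * axisScaling u φ c = A := by
  rw [axisScaling, Matrix.mul_add, Matrix.mul_one, Matrix.mul_smul, mul_vecMulVec, h,
    zero_vecMulVec, smul_zero, add_zero]

lemma axisScaling_mul_of_vecMul_eq_zero {A : Matrix n ι R} {φ : n → R} (h : φ ᵥ* A = 0)
    (u : n → R) (c : R) : axisScaling u φ c * A = A := by
  have hzero : vecMulVec u φ * A = 0 := by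
    ext i j
    simp [vecMulVec_mul, h, vecMulVec_apply]
  rw [axisScaling, Matrix.add_mul, Matrix.one_mul, Matrix.smul_mul, hzero, smul_zero, add_zero]

end AxisScaling

lemma isClosed_setOf_ker_le {R n κ : Type*} [CommRing R] [TopologicalSpace R]
    [IsTopologicalRing R] [T2Space R] [Fintype n] (B : Matrix κ n R) :
    IsClosed {A : Matrix κ n R | LinearMap.ker B.mulVecLin ≤ LinearMap.ker A.mulVecLin} := by
  simp only [SetLike.le_def, LinearMap.mem_ker, mulVecLin_apply, Set.ofPred_forall]
  exact isClosed_iInter fun x => isClosed_iInter fun _ =>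
    isClosed_eq (by fun_prop) continuous_const

section Orbit

variable {R n ι κ : Type*} [CommRing R] [Fintype n] [DecidableEq n]

/-- The orbit of `(α, β)` under the action `α ↦ α g⁻¹`, `β ↦ g β` of the special linear group. -/
def slOrbit (α : Matrix κ n R) (β : Matrix n ι R) : Set (Matrix κ n R × Matrix n ι R) :=
  {q | ∃ g : Matrix.SpecialLinearGroup n R,
    q = (α * (↑(g⁻¹) : Matrix n n R), (↑g : Matrix n n R) * β)}

variable {α α' : Matrix κ n R} {β β' : Matrix n ι R}

lemma mem_slOrbit_iff :
    (α', β') ∈ slOrbit α β ↔ ∃ g : Matrix n n R, g.det = 1 ∧ α' * g = α ∧ g * β = β' := by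
  constructor
  · rintro ⟨g, h⟩
    obtain ⟨rfl, rfl⟩ := Prod.mk.inj h
    refine ⟨g, g.det_coe, ?_, rfl⟩
    have hg : (↑(g⁻¹) : Matrix n n R) * (↑g : Matrix n n R) = 1 :=
      congrArg Subtype.val (inv_mul_cancel g)
    rw [Matrix.mul_assoc, hg, Matrix.mul_one]
  · rintro ⟨g, hdet, rfl, rfl⟩
    let G : Matrix.SpecialLinearGroup n R := ⟨g, hdet⟩
    have hG : g * (↑(G⁻¹) : Matrix n n R) = 1 := congrArg Subtype.val (mul_inv_cancel G)
    refine ⟨G, Prod.ext ?_ rfl⟩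
    change α' = α' * g * (↑(G⁻¹) : Matrix n n R)
    rw [Matrix.mul_assoc, hG, Matrix.mul_one]

lemma mem_slOrbit_of_mem_slOrbit (h : (α', β') ∈ slOrbit α β) : (α, β) ∈ slOrbit α' β' := by
  obtain ⟨g, hdet, rfl, rfl⟩ := mem_slOrbit_iff.1 h
  have hg : IsUnit g.det := hdet ▸ isUnit_one
  refine mem_slOrbit_iff.2 ⟨g⁻¹, ?_, mul_nonsing_inv_cancel_right g α' hg,
    nonsing_inv_mul_cancel_left g β hg⟩
  rw [det_nonsing_inv, hdet, Ring.inverse_one]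

lemma transpose_mem_slOrbit_transpose (h : (α', β') ∈ slOrbit α β) :
    (β'ᵀ, α'ᵀ) ∈ slOrbit βᵀ αᵀ := by
  obtain ⟨g, hdet, rfl, rfl⟩ := mem_slOrbit_iff.1 h
  refine mem_slOrbit_of_mem_slOrbit (mem_slOrbit_iff.2 ⟨gᵀ, ?_, ?_, ?_⟩)
  · rw [det_transpose, hdet]
  · exact (transpose_mul _ _).symm
  · exact (transpose_mul _ _).symm

lemma isClosed_slOrbit_transpose [TopologicalSpace R] (h : IsClosed (slOrbit α β)) :
    IsClosed (slOrbit βᵀ αᵀ) := by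
  have hpre : slOrbit βᵀ αᵀ = (fun q => (q.2ᵀ, q.1ᵀ)) ⁻¹' slOrbit α β :=
    Set.ext fun _ => ⟨transpose_mem_slOrbit_transpose, transpose_mem_slOrbit_transpose⟩
  rw [hpre]
  exact h.preimage (by fun_prop)

lemma mul_eq_mul_of_mem_slOrbit (h : (α', β') ∈ slOrbit α β) : α' * β' = α * β := by
  obtain ⟨g, -, rfl, rfl⟩ := mem_slOrbit_iff.1 h
  rw [Matrix.mul_assoc]

lemma ker_le_ker_of_mem_slOrbit [Fintype ι] (h : (α', β') ∈ slOrbit α β) :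
    LinearMap.ker β.mulVecLin ≤ LinearMap.ker β'.mulVecLin := by
  obtain ⟨g, -, -, rfl⟩ := mem_slOrbit_iff.1 h
  rw [mulVecLin_mul]
  exact LinearMap.ker_le_ker_comp _ _

lemma isClosed_slOrbit_of_surjective [Fintype ι] [TopologicalSpace R] [IsTopologicalRing R]
    [T2Space R] (α : Matrix κ n R) {β : Matrix n ι R} (hβ : Function.Surjective β.mulVecLin) :
    IsClosed (slOrbit α β) := by
  obtain ⟨r, hr⟩ := mulVec_surjective_iff_exists_right_inverse.1 hβ
  have hset : slOrbit α β =
      {q | (q.2 * r).det = 1 ∧ q.1 * (q.2 * r) = α ∧ q.2 * r * β = q.2} := by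
    ext ⟨α', β'⟩
    refine mem_slOrbit_iff.trans ⟨?_, fun h => ⟨β' * r, h⟩⟩
    rintro ⟨g, hdet, hα, rfl⟩
    have hg : g * β * r = g := by rw [Matrix.mul_assoc, hr, Matrix.mul_one]
    simp only [Set.mem_ofPred_eq, hg]
    exact ⟨hdet, hα, trivial⟩
  rw [hset]
  exact (isClosed_eq (by fun_prop) continuous_const).inter
    ((isClosed_eq (by fun_prop) continuous_const).inter (isClosed_eq (by fun_prop) (by fun_prop)))

end Orbit

section Field

variable {K n ι κ : Type*} [Field K] [Fintype n] [DecidableEq n]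

section Degeneration

variable [TopologicalSpace K] [IsTopologicalRing K] [NeBot (𝓝[≠] (0 : K))]

lemma mem_closure_slOrbit_of_mulVec_eq_zero {α : Matrix κ n K} {β : Matrix n ι K}
    {u v φ ψ : n → K} (hα : α *ᵥ u = 0) (hβ : ψ ᵥ* β = 0) (hφ : φ ⬝ᵥ u = 1) (hψ : ψ ⬝ᵥ v = 1)
    (hψu : ψ ⬝ᵥ u = 0) :
    (α * axisScaling v ψ 0, axisScaling u φ 0 * β) ∈ closure (slOrbit α β) := by
  refine map_mem_closure (f := fun t => (α * axisScaling v ψ t, axisScaling u φ t * β))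
    (by fun_prop) (dense_compl_singleton (0 : K) 0) fun t ht => mem_slOrbit_iff.2
      ⟨axisScaling u φ t * axisScaling v ψ t⁻¹, ?_, ?_, ?_⟩
  · rw [det_mul, det_axisScaling hφ, det_axisScaling hψ, mul_inv_cancel₀ ht]
  · have hu : (α * axisScaling v ψ t) *ᵥ u = 0 := by
      rw [← mulVec_mulVec, axisScaling_mulVec, hψu, mul_zero, zero_smul, add_zero, hα]
    rw [← Matrix.mul_assoc, mul_axisScaling_of_mulVec_eq_zero hu, Matrix.mul_assoc,
      axisScaling_mul_axisScaling hψ, mul_inv_cancel₀ ht, axisScaling_one, Matrix.mul_one]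
  · rw [Matrix.mul_assoc, axisScaling_mul_of_vecMul_eq_zero hβ]

lemma disjoint_ker_range_of_isClosed_slOrbit [Fintype ι] {α : Matrix κ n K} {β : Matrix n ι K}
    (h : IsClosed (slOrbit α β)) (hβ : ¬ Function.Surjective β.mulVecLin) :
    Disjoint (LinearMap.ker α.mulVecLin) (LinearMap.range β.mulVecLin) := by
  rw [Submodule.disjoint_def]
  rintro _ hα ⟨x, rfl⟩
  by_contra hx
  obtain ⟨v, hv⟩ := not_forall.1 hβ
  obtain ⟨ψ, hψβ, hψv⟩ := exists_vecMul_eq_zero_of_notMem_range hv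
  obtain ⟨φ, hφ⟩ := exists_dotProduct_eq_one hx
  have hψx : ψ ⬝ᵥ β.mulVecLin x = 0 := by
    rw [mulVecLin_apply, dotProduct_mulVec, hψβ, zero_dotProduct]
  have hmem := h.closure_subset (mem_closure_slOrbit_of_mulVec_eq_zero hα hψβ hφ hψv hψx)
  have hker : (axisScaling (β.mulVecLin x) φ 0 * β) *ᵥ x = 0 := by
    rw [← mulVec_mulVec, ← mulVecLin_apply β, axisScaling_mulVec, hφ, zero_sub, mul_one, neg_smul,
      one_smul, add_neg_cancel]
  exact hx (ker_le_ker_of_mem_slOrbit (mem_slOrbit_of_mem_slOrbit hmem) hker)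

lemma isCompl_ker_range_of_isClosed_slOrbit [Fintype ι] [Finite κ] {α : Matrix κ n K}
    {β : Matrix n ι K} (h : IsClosed (slOrbit α β)) (hα : ¬ Function.Injective α.mulVecLin)
    (hβ : ¬ Function.Surjective β.mulVecLin) :
    IsCompl (LinearMap.ker α.mulVecLin) (LinearMap.range β.mulVecLin) := by
  have := Fintype.ofFinite κ
  have hrankβ := disjoint_ker_range_of_isClosed_slOrbit h hβ
  have hrankα := disjoint_ker_range_of_isClosed_slOrbit (isClosed_slOrbit_transpose h)
    (mt (surjective_mulVecLin_transpose_iff α).1 hα)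
  rw [disjoint_ker_range_mulVecLin_iff] at hrankα hrankβ
  rw [← transpose_mul, rank_transpose, rank_transpose] at hrankα
  exact (isCompl_ker_range_mulVecLin_iff α β).2 ⟨hrankβ, hrankα⟩

end Degeneration

section Complementary

variable [Fintype ι] {α α' : Matrix κ n K} {β β' : Matrix n ι K}

lemma mem_slOrbit_of_not_ker_le_range_of_det_ne_zero
    (h : ¬ LinearMap.ker α.mulVecLin ≤ LinearMap.range β.mulVecLin)
    {g : Matrix n n K} (hg : g.det ≠ 0) (hgα : α' * g = α) (hgβ : g * β = β') :
    (α', β') ∈ slOrbit α β := by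
  obtain ⟨u, hu, hu'⟩ := SetLike.not_le_iff_exists.1 h
  obtain ⟨φ, hφβ, hφu⟩ := exists_vecMul_eq_zero_of_notMem_range hu'
  refine mem_slOrbit_iff.2 ⟨g * axisScaling u φ g.det⁻¹, ?_, ?_, ?_⟩
  · rw [det_mul, det_axisScaling hφu, mul_inv_cancel₀ hg]
  · rw [← Matrix.mul_assoc, hgα, mul_axisScaling_of_mulVec_eq_zero hu]
  · rw [Matrix.mul_assoc, axisScaling_mul_of_vecMul_eq_zero hφβ, hgβ]

lemma mem_slOrbit_of_isCompl_of_mul_eq_mul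
    (h : IsCompl (LinearMap.ker α.mulVecLin) (LinearMap.range β.mulVecLin))
    (h' : IsCompl (LinearMap.ker α'.mulVecLin) (LinearMap.range β'.mulVecLin))
    (hα : ¬ Function.Injective α.mulVecLin) (hmul : α' * β' = α * β) :
    (α', β') ∈ slOrbit α β := by
  classical
  obtain ⟨e, heα, heβ⟩ := exists_linearEquiv_of_comp_eq_comp h h'
    (by rw [← mulVecLin_mul, hmul, mulVecLin_mul])
  have he : (LinearMap.toMatrix' (e : (n → K) →ₗ[K] n → K)).mulVecLin = e :=
    toLin'_toMatrix' _
  have hker : ¬ LinearMap.ker α.mulVecLin ≤ LinearMap.range β.mulVecLin :=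
    fun hle => hα (LinearMap.ker_eq_bot.1 (h.disjoint.eq_bot_of_le hle))
  refine mem_slOrbit_of_not_ker_le_range_of_det_ne_zero hker (g := LinearMap.toMatrix' e) ?_ ?_ ?_
  · rw [LinearMap.det_toMatrix']
    exact e.isUnit_det'.ne_zero
  · exact toLin'.injective (by simpa only [toLin'_apply', mulVecLin_mul, he] using heα)
  · exact toLin'.injective (by simpa only [toLin'_apply', mulVecLin_mul, he] using heβ)

lemma mem_slOrbit_iff_of_isCompl [Fintype κ]
    (h : IsCompl (LinearMap.ker α.mulVecLin) (LinearMap.range β.mulVecLin))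
    (hα : ¬ Function.Injective α.mulVecLin) :
    (α', β') ∈ slOrbit α β ↔ α' * β' = α * β ∧
      LinearMap.ker β.mulVecLin ≤ LinearMap.ker β'.mulVecLin ∧
      LinearMap.ker αᵀ.mulVecLin ≤ LinearMap.ker α'ᵀ.mulVecLin := by
  constructor
  · exact fun hmem => ⟨mul_eq_mul_of_mem_slOrbit hmem, ker_le_ker_of_mem_slOrbit hmem,
      ker_le_ker_of_mem_slOrbit (transpose_mem_slOrbit_transpose hmem)⟩
  · rintro ⟨hmul, hkerβ, hkerα⟩
    have h' := isCompl_ker_range_of_mul_eq_of_ker_le h hmul hkerβ hkerα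
    exact mem_slOrbit_of_isCompl_of_mul_eq_mul h h' hα hmul

end Complementary

section Closed

variable [TopologicalSpace K] [IsTopologicalRing K] [T2Space K] [Finite κ]

lemma isClosed_slOrbit_of_injective {α : Matrix κ n K} (hα : Function.Injective α.mulVecLin)
    (β : Matrix n ι K) : IsClosed (slOrbit α β) :=
  have := Fintype.ofFinite κ
  isClosed_slOrbit_transpose
    (isClosed_slOrbit_of_surjective βᵀ ((surjective_mulVecLin_transpose_iff α).2 hα))

variable [Fintype ι]

lemma isClosed_slOrbit_of_isCompl {α : Matrix κ n K} {β : Matrix n ι K}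
    (h : IsCompl (LinearMap.ker α.mulVecLin) (LinearMap.range β.mulVecLin)) :
    IsClosed (slOrbit α β) := by
  have := Fintype.ofFinite κ
  by_cases hα : Function.Injective α.mulVecLin
  · exact isClosed_slOrbit_of_injective hα β
  have hset : slOrbit α β = {q | q.1 * q.2 = α * β} ∩
      ({q | LinearMap.ker β.mulVecLin ≤ LinearMap.ker q.2.mulVecLin} ∩
        {q | LinearMap.ker αᵀ.mulVecLin ≤ LinearMap.ker q.1ᵀ.mulVecLin}) :=
    Set.ext fun _ => mem_slOrbit_iff_of_isCompl h hα
  rw [hset]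
  exact (isClosed_eq (by fun_prop) continuous_const).inter
    (((isClosed_setOf_ker_le β).preimage continuous_snd).inter
      ((isClosed_setOf_ker_le αᵀ).preimage (by fun_prop)))

theorem statement1_general [NeBot (𝓝[≠] (0 : K))] (α : Matrix κ n K) (β : Matrix n ι K) :
    IsClosed (slOrbit α β) ↔
      Function.Injective α.mulVecLin ∨ Function.Surjective β.mulVecLin ∨
        IsCompl (LinearMap.ker α.mulVecLin) (LinearMap.range β.mulVecLin) := by
  constructor
  · intro h
    by_contra! hcon
    exact hcon.2.2 (isCompl_ker_range_of_isClosed_slOrbit h hcon.1 hcon.2.1)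
  · rintro (hα | hβ | h)
    · exact isClosed_slOrbit_of_injective hα β
    · exact isClosed_slOrbit_of_surjective α hβ
    · exact isClosed_slOrbit_of_isCompl h

end Closed

end Field

/-- For complex matrices `α : ℂ^m → ℂ^p` and `β : ℂ^p → ℂ^m`,
the orbit of `(α, β)` under the `SL(m, ℂ)`-action `α ↦ α g⁻¹`, `β ↦ g β` is
closed in the product of the two matrix spaces (standard topology) if and only
if `α` is injective, or `β` is surjective, or `ℂ^m` is the internal direct sum
of `ker α` and `range β`. -/
theorem statement1 (m p : ℕ) (hm : 0 < m) (hp : 0 < p)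
    (α : Matrix (Fin p) (Fin m) ℂ) (β : Matrix (Fin m) (Fin p) ℂ) :
    IsClosed {q : Matrix (Fin p) (Fin m) ℂ × Matrix (Fin m) (Fin p) ℂ |
        ∃ g : Matrix.SpecialLinearGroup (Fin m) ℂ,
          q = (α * (↑(g⁻¹) : Matrix (Fin m) (Fin m) ℂ),
               (↑g : Matrix (Fin m) (Fin m) ℂ) * β)} ↔
      (Function.Injective α.mulVecLin ∨ Function.Surjective β.mulVecLin ∨
        IsCompl (LinearMap.ker α.mulVecLin) (LinearMap.range β.mulVecLin)) :=
  statement1_general α β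
end

section
/- Fix integers 0 < n_1 < n_2 < … < n_r = n and set k_i = n_{i+1} − n_i. For i = 1,…,r−1 let β_i : ℂ^{n_{i+1}} → ℂ^{n_i} be the standard projection β_i = (0_{n_i×k_i} ∣ I_{n_i}) onto the last n_i coordinates. Let P be the subgroup of SL(n,ℂ) consisting of block upper triangular matrices with diagonal blocks of sizes k_{r−1}, k_{r−2}, …, k_1, n_1 (from top left to bottom right), i.e., the parabolic subgroup preserving the flag of coordinate subspaces spanned by the first n − n_{r−1}, n − n_{r−2}, …, n − n_1 standard basis vectors. Then for g ∈ SL(n,ℂ) the following are equivalent: (a) there exist g_i ∈ SL(n_i,ℂ) for i = 1,…,r−1 such that g_i β_i = β_i g_{i+1} for all i = 1,…,r−1 (with g_r = g); (b) g lies in the commutator subgroup [P,P] of P, equivalently g is block upper triangular with respect to these block sizes and each of its diagonal blocks has determinant 1. -/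
/-- The standard surjection `β = (0_{a×(b-a)} ∣ I_a) : ℂ^b → ℂ^a`
(projection onto the last `a` coordinates, for `a ≤ b`). -/
def stdBeta (a b : ℕ) : Matrix (Fin a) (Fin b) ℂ :=
  Matrix.of fun j k => if (k : ℕ) = (j : ℕ) + (b - a) then 1 else 0

/-- Block upper triangularity of an `n × n` matrix (`n = dims (m+1)`) with
respect to the flag of coordinate subspaces spanned by the first
`n − dims s` standard basis vectors, `s = 1, …, m`; equivalently, with respect
to the consecutive diagonal blocks of sizes
`dims (m+1) − dims m, …, dims 2 − dims 1, dims 1`. -/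
def BlockUpperTriangularFlag (m : ℕ) (dims : ℕ → ℕ)
    (g : Matrix (Fin (dims (m+1))) (Fin (dims (m+1))) ℂ) : Prop :=
  ∀ s, 1 ≤ s → s ≤ m → ∀ p q : Fin (dims (m+1)),
    (q : ℕ) < dims (m+1) - dims s → dims (m+1) - dims s ≤ (p : ℕ) → g p q = 0

/-- The parabolic subgroup `P` of `SL(n, ℂ)` (with `n = dims (m+1)`) of block
upper triangular matrices for the above flag.  (Since the block upper
triangular elements of `SL(n, ℂ)` form a subgroup, the subgroup they generate
has exactly them as elements.) -/
def parabolicP (m : ℕ) (dims : ℕ → ℕ) :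
    Subgroup (Matrix.SpecialLinearGroup (Fin (dims (m+1))) ℂ) :=
  Subgroup.closure {h | BlockUpperTriangularFlag m dims ↑h}

/-!
Composing the relations `G i * β = β * G (i + 1)` up to level `m + 1` turns them into
`G i * β = β * g` with `β` the projection onto the last `dims i` coordinates. Such a relation says
that `g` preserves the kernel of `β` and that `G i` is the bottom right corner of `g`. Hence (a)
means that `g` is block upper triangular and that all these corners have determinant `1`; the
determinants of the diagonal blocks are the quotients of those of successive corners.

The determinant of a diagonal block is a homomorphism from `P` to a commutative group, so it is
trivial on `[P, P]`. Conversely, over a field with more than three elements, a transvection in `P`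
is a commutator of a diagonal matrix and another transvection, so `[P, P]` contains the
transvections of `P`, and the groups `SL` of the diagonal blocks because these are perfect. A block
triangular matrix whose diagonal blocks have determinant `1` is a product of such elements, one
column of blocks at a time.
-/

open Matrix
open scoped commutatorElement

section Perfect

variable {ι F : Type*} [Fintype ι] [DecidableEq ι] [Field F]

theorem coe_transvection_mul_transvection_mul_transvection {i j : ι} (hij : i ≠ j) {a : F}
    (ha : a ≠ 0) :
    (SpecialLinearGroup.transvection hij a * SpecialLinearGroup.transvection hij.symm (-a⁻¹) *
        SpecialLinearGroup.transvection hij a : Matrix ι ι F) =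
      1 - single i i 1 - single j j 1 + single i j a - single j i a⁻¹ := by
  simp only [SpecialLinearGroup.transvection_coe, ← single_neg, mul_add, add_mul, mul_one, one_mul,
    mul_neg, neg_mul, single_mul_single_same, inv_mul_cancel₀ ha, mul_inv_cancel₀ ha,
    single_mul_single_of_ne, ne_eq, hij.symm, not_false_eq_true]
  abel

theorem diag2n_eq_transvection_mul {i j : ι} (hij : i ≠ j) {a : F} (ha : a ≠ 0) :
    SpecialLinearGroup.diag2n hij a ha =
      SpecialLinearGroup.transvection hij a * SpecialLinearGroup.transvection hij.symm (-a⁻¹) *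
        SpecialLinearGroup.transvection hij a *
      (SpecialLinearGroup.transvection hij (-1) * SpecialLinearGroup.transvection hij.symm 1 *
        SpecialLinearGroup.transvection hij (-1)) := by
  have weyl_neg_one := coe_transvection_mul_transvection_mul_transvection hij
    (neg_ne_zero.mpr (one_ne_zero (α := F)))
  rw [inv_neg_one, neg_neg] at weyl_neg_one
  apply Subtype.ext
  simp only [Matrix.SpecialLinearGroup.coe_mul, weyl_neg_one,
    coe_transvection_mul_transvection_mul_transvection hij ha]
  trans 1 - single i i 1 - single j j 1 + single i i a + single j j a⁻¹
  · rw [SpecialLinearGroup.diag2n_coe]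
    ext p q
    simp only [Matrix.add_apply, Matrix.sub_apply, single_apply, one_apply, diagonal_apply]
    grind
  · simp only [← single_neg, mul_add, add_mul, mul_sub, sub_mul, mul_one, one_mul,
      mul_neg, single_mul_single_same, single_mul_single_of_ne, ne_eq, hij, hij.symm,
      not_false_eq_true]
    abel

theorem eq_top_of_transvection_mem {H : Subgroup (SpecialLinearGroup ι F)}
    (hH : ∀ {i j : ι} (hij : i ≠ j) (c : F), SpecialLinearGroup.transvection hij c ∈ H) :
    H = ⊤ := by
  refine (Subgroup.eq_top_iff' H).mpr fun g => ?_
  rcases subsingleton_or_nontrivial ι with _ | _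
  · rw [Subsingleton.elim g 1]
    exact one_mem H
  refine SpecialLinearGroup.diagonal_transvection_induction' (· ∈ H) g (fun i j hij a ha => ?_)
    (fun i j hij c => hH hij c) fun _ _ => mul_mem
  rw [diag2n_eq_transvection_mul hij ha]
  have weyl_mem (b c : F) : SpecialLinearGroup.transvection hij b *
      SpecialLinearGroup.transvection hij.symm c * SpecialLinearGroup.transvection hij b ∈ H :=
    mul_mem (mul_mem (hH hij b) (hH hij.symm c)) (hH hij b)
  exact mul_mem (weyl_mem _ _) (weyl_mem _ _)

theorem diag2n_mul_transvection {i j : ι} (hij : i ≠ j) {a : F} (ha : a ≠ 0) (c : F) :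
    SpecialLinearGroup.diag2n hij a ha * SpecialLinearGroup.transvection hij c =
      SpecialLinearGroup.transvection hij (a ^ 2 * c) * SpecialLinearGroup.diag2n hij a ha := by
  ext p q
  simp only [Matrix.SpecialLinearGroup.coe_mul, SpecialLinearGroup.diag2n_coe,
    SpecialLinearGroup.transvection_coe, diagonal_mul, mul_diagonal, Matrix.add_apply,
    single_apply, one_apply]
  grind

theorem commutator_diag2n_transvection {i j : ι} (hij : i ≠ j) {a : F} (ha : a ≠ 0) (c : F) :
    ⁅SpecialLinearGroup.diag2n hij a ha, SpecialLinearGroup.transvection hij c⁆ =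
      SpecialLinearGroup.transvection hij ((a ^ 2 - 1) * c) := by
  rw [commutatorElement_def, diag2n_mul_transvection, mul_inv_cancel_right,
    SpecialLinearGroup.transvection_inv, ← SpecialLinearGroup.transvection_add]
  congr 1
  ring

theorem transvection_mem_commutator_self {H : Subgroup (SpecialLinearGroup ι F)} {i j : ι}
    (hij : i ≠ j) (hF : ∃ a : F, a ≠ 0 ∧ a ^ 2 ≠ 1)
    (hdiag : ∀ (a : F) (ha : a ≠ 0), SpecialLinearGroup.diag2n hij a ha ∈ H)
    (htrans : ∀ c : F, SpecialLinearGroup.transvection hij c ∈ H) (c : F) :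
    SpecialLinearGroup.transvection hij c ∈ ⁅H, H⁆ := by
  obtain ⟨a, ha, ha2⟩ := hF
  rw [← mul_div_cancel₀ c (sub_ne_zero.mpr ha2), ← commutator_diag2n_transvection hij ha]
  exact Subgroup.commutator_mem_commutator (hdiag a ha) (htrans _)

theorem isPerfect_specialLinearGroup (hF : ∃ a : F, a ≠ 0 ∧ a ^ 2 ≠ 1) :
    Group.IsPerfect (SpecialLinearGroup ι F) where
  commutator_eq_top := eq_top_of_transvection_mem fun hij =>
    transvection_mem_commutator_self hij hF (fun _ _ => Subgroup.mem_top _)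
      fun _ => Subgroup.mem_top _

end Perfect

theorem toSquareBlock_mul {ι R α : Type*} [Fintype ι] [CommRing R] [LinearOrder α] {b : ι → α}
    {M N : Matrix ι ι R} (hM : BlockTriangular M b) (hN : BlockTriangular N b) (k : α) :
    (M * N).toSquareBlock b k = M.toSquareBlock b k * N.toSquareBlock b k := by
  refine (toBlock_mul_eq_add (b · = k) (b · = k) (b · = k) M N).trans (add_eq_left.mpr ?_)
  ext i j
  refine Finset.sum_eq_zero fun l _ => ?_
  rcases lt_or_gt_of_ne l.2 with hl | hl
  · exact mul_eq_zero_of_left (hM (hl.trans_eq i.2.symm)) _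
  · exact mul_eq_zero_of_right _ (hN (j.2.trans_lt hl))

section BlockParabolic

variable {ι R F α : Type*} [Fintype ι] [DecidableEq ι] [CommRing R] [Field F] [LinearOrder α]

variable (R) in
/-- The parabolic subgroup of `SL(ι, R)` of block upper triangular matrices; the blocks are the
fibres of `b`, in increasing order. -/
def blockParabolic (b : ι → α) : Subgroup (SpecialLinearGroup ι R) where
  carrier := {g | BlockTriangular (g : Matrix ι ι R) b}
  mul_mem' hg hh := BlockTriangular.mul hg hh
  one_mem' := blockTriangular_one
  inv_mem' {g} hg := by
    have := invertibleOfIsUnitDet (g : Matrix ι ι R) (by simp)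
    have coe_inv : ((g⁻¹ : SpecialLinearGroup ι R) : Matrix ι ι R) = (g : Matrix ι ι R)⁻¹ :=
      (inv_eq_right_inv (congrArg Subtype.val (mul_inv_cancel g))).symm
    simpa only [Set.mem_ofPred_eq, coe_inv] using blockTriangular_inv_of_blockTriangular hg

variable {b : ι → α}

variable (R) in
/-- The determinant of the `k`-th diagonal block, as a homomorphism on the parabolic subgroup. -/
def blockDetHom (b : ι → α) (k : α) : blockParabolic R b →* R where
  toFun g := (toSquareBlock (g.1 : Matrix ι ι R) b k).det
  map_one' := (congrArg det (toBlock_one_self (b · = k))).trans det_one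
  map_mul' g h := (congrArg det (toSquareBlock_mul g.2 h.2 k)).trans (det_mul _ _)

theorem det_toSquareBlock_eq_one_of_mem_commutator {g : SpecialLinearGroup ι R}
    (hg : g ∈ ⁅blockParabolic R b, blockParabolic R b⁆) (k : α) :
    ((g : Matrix ι ι R).toSquareBlock b k).det = 1 := by
  rw [← Subgroup.map_subtype_commutator] at hg
  obtain ⟨h, hh, rfl⟩ := hg
  exact congrArg Units.val
    (Abelianization.commutator_subset_ker (blockDetHom R b k).toHomUnits hh)

theorem transvection_mem_commutator_blockParabolic (hF : ∃ a : F, a ≠ 0 ∧ a ^ 2 ≠ 1) {i j : ι}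
    (hij : i ≠ j) (hb : b i ≤ b j) (c : F) :
    SpecialLinearGroup.transvection hij c ∈ ⁅blockParabolic F b, blockParabolic F b⁆ :=
  transvection_mem_commutator_self hij hF (fun _ _ => blockTriangular_diagonal _)
    (blockTriangular_transvection hb) c

variable (R) in
/-- The embedding `SL(p, R) → SL(ι, R)` extending a matrix on the subtype `p` by the identity. -/
def subtypeEmbedding (p : ι → Prop) [DecidablePred p] :
    SpecialLinearGroup {i // p i} R →* SpecialLinearGroup ι R where
  toFun A := ⟨reindexAlgEquiv R R (Equiv.sumCompl p) (fromBlocks A 0 0 1), by simp⟩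
  map_one' := by
    apply Subtype.ext
    simp
  map_mul' A B := by
    apply Subtype.ext
    refine .trans ?_ (map_mul (reindexAlgEquiv R R (Equiv.sumCompl p)) (fromBlocks A 0 0 1)
      (fromBlocks B 0 0 1))
    simp [fromBlocks_multiply]

theorem coe_subtypeEmbedding_apply (p : ι → Prop) [DecidablePred p]
    (A : SpecialLinearGroup {i // p i} R) (i j : ι) :
    (subtypeEmbedding R p A : Matrix ι ι R) i j =
      if h : p i ∧ p j then A ⟨i, h.1⟩ ⟨j, h.2⟩ else (1 : Matrix ι ι R) i j := by
  have ne_of_pos_of_neg {i j : ι} (hi : p i) (hj : ¬ p j) : i ≠ j := fun h => hj (h ▸ hi)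
  change reindexAlgEquiv R R (Equiv.sumCompl p) (fromBlocks (A : Matrix _ _ R) 0 0 1) i j = _
  by_cases hi : p i <;> by_cases hj : p j <;>
    simp [hi, hj, Equiv.sumCompl_symm_apply_of_pos,
      Equiv.sumCompl_symm_apply_of_neg, one_apply, ne_of_pos_of_neg, (ne_of_pos_of_neg _ _).symm]

theorem range_subtypeEmbedding_le_blockParabolic (k : α) :
    (subtypeEmbedding R (b · = k)).range ≤ blockParabolic R b := by
  rintro _ ⟨A, rfl⟩ i j hij
  rw [coe_subtypeEmbedding_apply, dif_neg fun h => hij.ne (h.2.trans h.1.symm),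
    one_apply_ne (ne_of_apply_ne b hij.ne')]

theorem subtypeEmbedding_mem_commutator_blockParabolic (hF : ∃ a : F, a ≠ 0 ∧ a ^ 2 ≠ 1) (k : α)
    (A : SpecialLinearGroup {i // b i = k} F) :
    subtypeEmbedding F (b · = k) A ∈ ⁅blockParabolic F b, blockParabolic F b⁆ := by
  have := isPerfect_specialLinearGroup (ι := {i // b i = k}) hF
  have := Group.IsPerfect.range (subtypeEmbedding F (b · = k))
  have range_le := range_subtypeEmbedding_le_blockParabolic (R := F) (b := b) k
  refine Subgroup.commutator_mono range_le range_le ?_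
  rw [Subgroup.commutator_eq_self]
  exact ⟨A, rfl⟩

end BlockParabolic

section Mask

variable {ι R : Type*} [DecidableEq ι] [Semiring R]

/-- The matrix with the entries of `X` at the positions in `E` and zeros elsewhere. A block
triangular matrix is assembled from its columns of blocks by enlarging `E`. -/
def mask (X : Matrix ι ι R) (E : Finset (ι × ι)) : Matrix ι ι R :=
  of fun i j => if (i, j) ∈ E then X i j else 0

theorem mask_apply (X : Matrix ι ι R) (E : Finset (ι × ι)) (i j : ι) :
    mask X E i j = if (i, j) ∈ E then X i j else 0 :=
  rfl

theorem mask_union {X : Matrix ι ι R} {E E' : Finset (ι × ι)} (hdisj : Disjoint E E') :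
    mask X (E ∪ E') = mask X E + mask X E' := by
  ext i j
  rw [Finset.disjoint_left] at hdisj
  simp only [mask_apply, Matrix.add_apply, Finset.mem_union]
  grind

theorem mask_mul_mask_eq_zero [Fintype ι] {X : Matrix ι ι R} {E E' : Finset (ι × ι)}
    (hzero : ∀ i l j, (i, l) ∈ E → (l, j) ∈ E' → X l j = 0) : mask X E * mask X E' = 0 := by
  ext i j
  rw [mul_apply]
  refine Finset.sum_eq_zero fun l _ => ?_
  simp only [mask_apply]
  split_ifs with hil hlj
  · rw [hzero i l j hil hlj, mul_zero]
  all_goals simp only [mul_zero, zero_mul]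

theorem one_add_mask_mul_one_add_mask [Fintype ι] {X : Matrix ι ι R} {E E' : Finset (ι × ι)}
    (hdisj : Disjoint E E') (hzero : ∀ i l j, (i, l) ∈ E → (l, j) ∈ E' → X l j = 0) :
    (1 + mask X E) * (1 + mask X E') = 1 + mask X (E ∪ E') := by
  rw [mask_union hdisj, mul_add, add_mul, add_mul, mask_mul_mask_eq_zero hzero]
  simp only [one_mul, mul_one, add_zero, add_assoc]

end Mask

section Generation

variable {ι F α : Type*} [Fintype ι] [DecidableEq ι] [Field F] [LinearOrder α] {b : ι → α}

variable (F) in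
/-- The monoid of matrices underlying the commutator subgroup of a parabolic subgroup. -/
def commutatorMatrices (b : ι → α) : Submonoid (Matrix ι ι F) :=
  ⁅blockParabolic F b, blockParabolic F b⁆.toSubmonoid.map SpecialLinearGroup.coeMonoidHom

theorem coe_mem_commutatorMatrices {g : SpecialLinearGroup ι F} :
    (g : Matrix ι ι F) ∈ commutatorMatrices F b ↔ g ∈ ⁅blockParabolic F b, blockParabolic F b⁆ :=
  Submonoid.mem_map_iff_mem Subtype.val_injective

theorem one_add_mask_mem_of_lt (hF : ∃ a : F, a ≠ 0 ∧ a ^ 2 ≠ 1) {k : α} (X : Matrix ι ι F)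
    {E : Finset (ι × ι)} (hE : ∀ p ∈ E, b p.1 < k ∧ b p.2 = k) :
    1 + mask X E ∈ commutatorMatrices F b := by
  induction E using Finset.induction_on with
  | empty =>
    convert one_mem (commutatorMatrices F b)
    ext i j
    simp [mask_apply]
  | insert p E hp ih =>
    rw [Finset.forall_mem_insert] at hE
    obtain ⟨⟨hp₁, hp₂⟩, hE⟩ := hE
    have hb : b p.1 < b p.2 := hp₂ ▸ hp₁
    have hne : p.1 ≠ p.2 := ne_of_apply_ne b hb.ne
    have transvection_eq : 1 + mask X {p} =
        (SpecialLinearGroup.transvection hne (X p.1 p.2) : Matrix ι ι F) := by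
      ext i j
      simp only [mask_apply, SpecialLinearGroup.transvection_coe, Matrix.add_apply, single_apply,
        Finset.mem_singleton]
      grind
    rw [Finset.insert_eq, ← one_add_mask_mul_one_add_mask (Finset.disjoint_singleton_left.mpr hp),
      transvection_eq]
    · exact mul_mem (coe_mem_commutatorMatrices.mpr
        (transvection_mem_commutator_blockParabolic hF hne hb.le _)) (ih hE)
    · rintro i l j hil hlj
      have := hE _ hlj
      grind

theorem one_add_mask_diagonal_mem (hF : ∃ a : F, a ≠ 0 ∧ a ^ 2 ≠ 1) {k : α} {M : Matrix ι ι F}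
    (hdet : (M.toSquareBlock b k).det = 1) :
    1 + mask (M - 1) {p | b p.1 = k ∧ b p.2 = k} ∈ commutatorMatrices F b := by
  convert coe_mem_commutatorMatrices.mpr
    (subtypeEmbedding_mem_commutator_blockParabolic hF k ⟨_, hdet⟩)
  ext i j
  refine .trans ?_ (coe_subtypeEmbedding_apply _ _ i j).symm
  rw [Matrix.add_apply, mask_apply]
  split_ifs <;> simp_all [toSquareBlock_def]

theorem one_add_mask_column_mem (hF : ∃ a : F, a ≠ 0 ∧ a ^ 2 ≠ 1) {k : α} {M : Matrix ι ι F}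
    (hM : BlockTriangular M b) (hdet : (M.toSquareBlock b k).det = 1) :
    1 + mask (M - 1) {p | b p.2 = k} ∈ commutatorMatrices F b := by
  let D : Finset (ι × ι) := {p | b p.1 = k ∧ b p.2 = k}
  let U : Finset (ι × ι) := {p | b p.1 < k ∧ b p.2 = k}
  have hDU : Disjoint D U := Finset.disjoint_left.mpr (by grind)
  have factorisation := one_add_mask_mul_one_add_mask (X := M - 1) hDU (by grind)
  have mask_eq : mask (M - 1) (D ∪ U) = mask (M - 1) {p | b p.2 = k} := by
    ext i j
    have : k < b i → b j = k → (M - 1) i j = 0 := fun hi hj => by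
      rw [BlockTriangular.sub hM blockTriangular_one (hj ▸ hi)]
    simp only [mask_apply]
    grind
  rw [← mask_eq, ← factorisation]
  exact mul_mem (one_add_mask_diagonal_mem hF hdet)
    (one_add_mask_mem_of_lt hF (k := k) _ (by grind))

theorem one_add_mask_columns_mem (hF : ∃ a : F, a ≠ 0 ∧ a ^ 2 ≠ 1) {M : Matrix ι ι F}
    (hM : BlockTriangular M b) (hdet : ∀ k, (M.toSquareBlock b k).det = 1) (S : Finset α) :
    1 + mask (M - 1) {p | b p.2 ∈ S} ∈ commutatorMatrices F b := by
  induction S using Finset.induction_on_min with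
  | empty =>
    convert one_mem (commutatorMatrices F b)
    ext i j
    simp [mask_apply]
  | insert k S hk ih =>
    have columns_insert : ({p | b p.2 ∈ insert k S} : Finset (ι × ι)) =
        ({p | b p.2 ∈ S} : Finset (ι × ι)) ∪ ({p | b p.2 = k} : Finset (ι × ι)) := by
      grind
    rw [columns_insert, ← one_add_mask_mul_one_add_mask]
    · exact mul_mem ih (one_add_mask_column_mem hF hM (hdet k))
    · rw [Finset.disjoint_left]
      grind
    · intro i l j hil hlj
      refine BlockTriangular.sub hM blockTriangular_one ?_
      grind

theorem mem_commutator_blockParabolic_iff (hF : ∃ a : F, a ≠ 0 ∧ a ^ 2 ≠ 1)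
    {g : SpecialLinearGroup ι F} :
    g ∈ ⁅blockParabolic F b, blockParabolic F b⁆ ↔
      BlockTriangular (g : Matrix ι ι F) b ∧
        ∀ k, ((g : Matrix ι ι F).toSquareBlock b k).det = 1 := by
  refine ⟨fun hg => ⟨Subgroup.commutator_le_self _ hg,
    det_toSquareBlock_eq_one_of_mem_commutator hg⟩, fun ⟨hg, hdet⟩ => ?_⟩
  rw [← coe_mem_commutatorMatrices]
  convert one_add_mask_columns_mem hF hg hdet (Finset.univ.image b)
  ext i j
  simp [mask_apply]

end Generation

section Corner

variable {R : Type*} [CommRing R] {a b n : ℕ}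

/-- The inclusion of `Fin a` into `Fin n` as the last `a` indices. -/
def lastIndices (h : a ≤ n) (p : Fin a) : Fin n :=
  ⟨n - a + p, by omega⟩

theorem exists_lastIndices_eq (h : a ≤ n) {p : Fin n} (hp : n - a ≤ p) :
    ∃ p', lastIndices h p' = p :=
  ⟨⟨p - (n - a), by omega⟩, Fin.ext (by simp only [lastIndices]; omega)⟩

theorem lastIndices_injective (h : a ≤ n) : Function.Injective (lastIndices h) := fun p q hpq => by
  simpa [lastIndices, Fin.ext_iff] using hpq

theorem lastIndices_lastIndices (hab : a ≤ b) (hbn : b ≤ n) (p : Fin a) :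
    lastIndices hbn (lastIndices hab p) = lastIndices (hab.trans hbn) p :=
  Fin.ext (by simp only [lastIndices]; omega)

/-- The bottom right `a × a` corner of a matrix. -/
def corner (h : a ≤ n) (M : Matrix (Fin n) (Fin n) R) : Matrix (Fin a) (Fin a) R :=
  M.submatrix (lastIndices h) (lastIndices h)

/-- The entries of `M` that lie in the last `a` rows but not in the last `a` columns vanish, i.e.
`M` preserves the span of the first `n - a` standard basis vectors. -/
def LowerLeftVanishes (a : ℕ) (M : Matrix (Fin n) (Fin n) R) : Prop :=
  ∀ p q : Fin n, (q : ℕ) < n - a → n - a ≤ (p : ℕ) → M p q = 0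

/-- The diagonal block of `M` complementary to `corner a` in `corner b`. -/
def diagBlock (a : ℕ) (hb : b ≤ n) (M : Matrix (Fin n) (Fin n) R) :
    Matrix (Fin (b - a)) (Fin (b - a)) R :=
  (corner hb M).submatrix (Fin.castLE (Nat.sub_le b a)) (Fin.castLE (Nat.sub_le b a))

theorem det_corner_eq_mul (hab : a ≤ b) (hbn : b ≤ n) {M : Matrix (Fin n) (Fin n) R}
    (hM : LowerLeftVanishes a M) :
    (corner hbn M).det = (diagBlock a hbn M).det * (corner (hab.trans hbn) M).det := by
  let e : Fin (b - a) ⊕ Fin a ≃ Fin b := finSumFinEquiv.trans (finCongr (Nat.sub_add_cancel hab))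
  have e_inr (p : Fin a) : e (Sum.inr p) = lastIndices hab p := rfl
  have toBlocks₂₁_eq_zero : ((corner hbn M).submatrix e e).toBlocks₂₁ = 0 := by
    ext p q
    refine hM _ _ ?_ ?_ <;> simp [e, lastIndices] <;> omega
  have toBlocks₂₂_eq : ((corner hbn M).submatrix e e).toBlocks₂₂ = corner (hab.trans hbn) M := by
    ext p q
    simp only [toBlocks₂₂, corner, submatrix_apply, of_apply, e_inr, lastIndices_lastIndices]
  rw [← det_submatrix_equiv_self e, ← fromBlocks_toBlocks ((corner hbn M).submatrix e e),
    toBlocks₂₁_eq_zero, det_fromBlocks_zero₂₁, toBlocks₂₂_eq]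
  rfl

variable (R) in
/-- The standard projection `R^b → R^a` onto the last `a` coordinates, for `a ≤ b`. -/
def stdProj (a b : ℕ) : Matrix (Fin a) (Fin b) R :=
  of fun j k => if (k : ℕ) = (j : ℕ) + (b - a) then 1 else 0

theorem stdProj_self (n : ℕ) : stdProj R n n = 1 := by
  ext j k
  simp [stdProj, one_apply, Fin.ext_iff, eq_comm]

theorem stdProj_eq_submatrix_one (h : a ≤ n) :
    stdProj R a n = (1 : Matrix (Fin n) (Fin n) R).submatrix (lastIndices h) id := by
  ext j k
  simp only [stdProj, of_apply, submatrix_apply, one_apply, lastIndices, id, Fin.ext_iff]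
  exact if_congr (by omega) rfl rfl

theorem stdProj_mul (h : a ≤ n) {κ : Type*} (M : Matrix (Fin n) κ R) :
    stdProj R a n * M = M.submatrix (lastIndices h) id := by
  rw [stdProj_eq_submatrix_one h]
  exact one_submatrix_mul _ (Equiv.refl _) M

theorem stdProj_mul_stdProj (hab : a ≤ b) (hbn : b ≤ n) :
    stdProj R a b * stdProj R b n = stdProj R a n := by
  rw [stdProj_mul hab, stdProj_eq_submatrix_one hbn, stdProj_eq_submatrix_one (hab.trans hbn),
    submatrix_submatrix]
  congr
  exact funext (lastIndices_lastIndices hab hbn)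

theorem mul_stdProj_apply_lastIndices (h : a ≤ n) {κ : Type*} (X : Matrix κ (Fin a) R) (i : κ)
    (q : Fin a) : (X * stdProj R a n) i (lastIndices h q) = X i q := by
  simp [stdProj_eq_submatrix_one h, mul_apply, one_apply, (lastIndices_injective h).eq_iff]

theorem mul_stdProj_apply_of_lt {κ : Type*} (X : Matrix κ (Fin a) R) (i : κ) {q : Fin n}
    (hq : (q : ℕ) < n - a) : (X * stdProj R a n) i q = 0 := by
  rw [mul_apply]
  refine Finset.sum_eq_zero fun l _ => ?_
  rw [stdProj, of_apply, if_neg (by omega), mul_zero]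

theorem mul_stdProj_injective (h : a ≤ n) {κ : Type*} :
    Function.Injective fun X : Matrix κ (Fin a) R => X * stdProj R a n := fun X Y hXY => by
  ext i q
  rw [← mul_stdProj_apply_lastIndices h X, ← mul_stdProj_apply_lastIndices h Y]
  exact congrFun₂ hXY i _

theorem mul_stdProj_eq_stdProj_mul_iff (h : a ≤ n) {X : Matrix (Fin a) (Fin a) R}
    {M : Matrix (Fin n) (Fin n) R} :
    X * stdProj R a n = stdProj R a n * M ↔ LowerLeftVanishes a M ∧ X = corner h M := by
  rw [stdProj_mul h]
  constructor
  · refine fun hXM => ⟨fun p q hq hp => ?_, ?_⟩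
    · obtain ⟨p, rfl⟩ := exists_lastIndices_eq h hp
      exact (congrFun₂ hXM p q).symm.trans (mul_stdProj_apply_of_lt X p hq)
    · ext p q
      exact (mul_stdProj_apply_lastIndices h X p q).symm.trans (congrFun₂ hXM p _)
  · rintro ⟨hM, rfl⟩
    ext p q
    rcases lt_or_ge (q : ℕ) (n - a) with hq | hq
    · exact (mul_stdProj_apply_of_lt _ p hq).trans
        (hM _ _ hq (Nat.le_add_right (n - a) p)).symm
    · obtain ⟨q, rfl⟩ := exists_lastIndices_eq h hq
      exact mul_stdProj_apply_lastIndices h _ p q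

end Corner

section Intertwiners

variable {R : Type*} [CommRing R] {m : ℕ} {dims : ℕ → ℕ}

theorem dims_le_last (hmono : MonotoneOn dims (Set.Iic (m + 1))) {i : ℕ} (hi : i ≤ m + 1) :
    dims i ≤ dims (m + 1) :=
  hmono hi Set.self_mem_Iic hi

theorem dims_le_succ (hmono : MonotoneOn dims (Set.Iic (m + 1))) {i : ℕ} (hi : i ≤ m) :
    dims i ≤ dims (i + 1) :=
  hmono (Nat.le_succ_of_le hi) (Nat.succ_le_succ hi) (Nat.le_succ i)

theorem forall_mul_stdProj_succ_iff (hmono : MonotoneOn dims (Set.Iic (m + 1)))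
    (G : ∀ i, Matrix (Fin (dims i)) (Fin (dims i)) R) :
    (∀ i ≤ m, G i * stdProj R (dims i) (dims (i + 1)) =
        stdProj R (dims i) (dims (i + 1)) * G (i + 1)) ↔
      ∀ i ≤ m + 1, G i * stdProj R (dims i) (dims (m + 1)) =
        stdProj R (dims i) (dims (m + 1)) * G (m + 1) := by
  have stdProj_succ_mul {i : ℕ} (hi : i ≤ m) :
      stdProj R (dims i) (dims (i + 1)) * stdProj R (dims (i + 1)) (dims (m + 1)) =
        stdProj R (dims i) (dims (m + 1)) :=
    stdProj_mul_stdProj (dims_le_succ hmono hi) (dims_le_last hmono (Nat.succ_le_succ hi))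
  constructor
  · intro hG i hi
    induction hi using Nat.decreasingInduction with
    | self => rw [stdProj_self, mul_one, one_mul]
    | of_succ k hk ih =>
      have hk : k ≤ m := Nat.le_of_lt_succ hk
      rw [← stdProj_succ_mul hk, ← Matrix.mul_assoc, hG k hk, Matrix.mul_assoc, ih,
        Matrix.mul_assoc]
  · intro hG i hi
    refine mul_stdProj_injective (dims_le_last hmono (Nat.succ_le_succ hi)) ?_
    simp only [Matrix.mul_assoc]
    rw [stdProj_succ_mul hi, hG i (Nat.le_succ_of_le hi), hG (i + 1) (Nat.succ_le_succ hi),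
      ← Matrix.mul_assoc, stdProj_succ_mul hi]

theorem exists_intertwiners_iff (hmono : MonotoneOn dims (Set.Iic (m + 1)))
    (g : SpecialLinearGroup (Fin (dims (m + 1))) R) :
    (∃ G : ∀ i, SpecialLinearGroup (Fin (dims i)) R, G (m + 1) = g ∧
        ∀ i ≤ m, (G i).1 * stdProj R (dims i) (dims (i + 1)) =
          stdProj R (dims i) (dims (i + 1)) * (G (i + 1)).1) ↔
      ∀ (i : ℕ) (hi : i ≤ m + 1), LowerLeftVanishes (dims i) g.1 ∧
        (corner (dims_le_last hmono hi) g.1).det = 1 := by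
  constructor
  · rintro ⟨G, rfl, hG⟩ i hi
    rw [forall_mul_stdProj_succ_iff hmono (fun i => (G i).1)] at hG
    obtain ⟨hM, hcorner⟩ := (mul_stdProj_eq_stdProj_mul_iff (dims_le_last hmono hi)).mp (hG i hi)
    exact ⟨hM, hcorner ▸ (G i).det_coe⟩
  · intro hg
    let G (i : ℕ) : SpecialLinearGroup (Fin (dims i)) R :=
      if hi : i ≤ m + 1 then ⟨corner (dims_le_last hmono hi) g.1, (hg i hi).2⟩ else 1
    have coe_G {i : ℕ} (hi : i ≤ m + 1) :
        (G i).1 = corner (dims_le_last hmono hi) g.1 :=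
      congrArg Subtype.val (dif_pos hi)
    have G_last : G (m + 1) = g := by
      apply Subtype.ext
      rw [coe_G le_rfl]
      ext p q
      simp [corner, lastIndices]
    refine ⟨G, G_last, (forall_mul_stdProj_succ_iff hmono (fun i => (G i).1)).mpr
      fun i hi => ?_⟩
    rw [mul_stdProj_eq_stdProj_mul_iff (dims_le_last hmono hi), G_last]
    exact ⟨(hg i hi).1, coe_G hi⟩

theorem forall_det_corner_eq_one_iff (h00 : dims 0 = 0)
    (hmono : MonotoneOn dims (Set.Iic (m + 1)))
    {M : Matrix (Fin (dims (m + 1))) (Fin (dims (m + 1))) R}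
    (hM : ∀ i ≤ m + 1, LowerLeftVanishes (dims i) M) :
    (∀ (i : ℕ) (hi : i ≤ m + 1), (corner (dims_le_last hmono hi) M).det = 1) ↔
      ∀ (s : ℕ) (hs : s ≤ m),
        (diagBlock (dims s) (dims_le_last hmono (Nat.succ_le_succ hs)) M).det = 1 := by
  have det_corner_succ (s : ℕ) (hs : s ≤ m) :=
    det_corner_eq_mul (dims_le_succ hmono hs) (dims_le_last hmono (Nat.succ_le_succ hs))
      (hM s (Nat.le_succ_of_le hs))
  constructor
  · intro hcorner s hs
    have := det_corner_succ s hs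
    rwa [hcorner (s + 1) (Nat.succ_le_succ hs), hcorner s (Nat.le_succ_of_le hs), mul_one,
      eq_comm] at this
  · intro hblock i hi
    induction i with
    | zero =>
      have : IsEmpty (Fin (dims 0)) := by rw [h00]; infer_instance
      exact det_isEmpty
    | succ s ih =>
      have hs : s ≤ m := Nat.le_of_succ_le_succ hi
      rw [det_corner_succ s hs, hblock s hs, ih (Nat.le_succ_of_le hs), one_mul]

end Intertwiners

section Flag

variable {R F : Type*} [CommRing R] [Field F] {m : ℕ} {dims : ℕ → ℕ}

/-- Block upper triangularity for the flag spanned by the first `dims (m + 1) - dims s` standard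
basis vectors, `1 ≤ s ≤ m`. -/
def FlagTriangular (m : ℕ) (dims : ℕ → ℕ)
    (M : Matrix (Fin (dims (m + 1))) (Fin (dims (m + 1))) R) : Prop :=
  ∀ s, 1 ≤ s → s ≤ m → LowerLeftVanishes (dims s) M

theorem flagTriangular_iff_forall_le (h00 : dims 0 = 0)
    {M : Matrix (Fin (dims (m + 1))) (Fin (dims (m + 1))) R} :
    FlagTriangular m dims M ↔ ∀ i ≤ m + 1, LowerLeftVanishes (dims i) M := by
  refine ⟨fun hM i hi p q hq hp => ?_, fun hM s _ hs => hM s (Nat.le_succ_of_le hs)⟩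
  have : i ≠ 0 := by rintro rfl; omega
  have : i ≠ m + 1 := by rintro rfl; omega
  exact hM i (by omega) (by omega) p q hq hp

/-- The index of the diagonal block containing `p`: the least `t` such that `p` lies in the last
`dims t` indices. Since this decreases from top left to bottom right, it is valued in `ℕᵒᵈ`. -/
def flagIndex (m : ℕ) (dims : ℕ → ℕ) (p : Fin (dims (m + 1))) : ℕᵒᵈ :=
  OrderDual.toDual (Nat.find (p := fun t => dims (m + 1) - dims t ≤ (p : ℕ)) ⟨m + 1, by simp⟩)

theorem flagIndex_eq_toDual_iff {p : Fin (dims (m + 1))} {t : ℕ} :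
    flagIndex m dims p = OrderDual.toDual t ↔
      dims (m + 1) - dims t ≤ (p : ℕ) ∧ ∀ s < t, (p : ℕ) < dims (m + 1) - dims s := by
  simp only [flagIndex, OrderDual.toDual_inj, Nat.find_eq_iff, not_le]

theorem flagIndex_eq_succ_iff (hmono : MonotoneOn dims (Set.Iic (m + 1))) {s : ℕ} (hs : s ≤ m)
    {p : Fin (dims (m + 1))} :
    flagIndex m dims p = OrderDual.toDual (s + 1) ↔
      dims (m + 1) - dims (s + 1) ≤ (p : ℕ) ∧ (p : ℕ) < dims (m + 1) - dims s := by
  rw [flagIndex_eq_toDual_iff]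
  refine and_congr_right fun _ => ⟨fun hlt => hlt s s.lt_succ_self, fun hlt r hr => ?_⟩
  have : dims r ≤ dims s :=
    hmono (Set.mem_Iic.mpr (by omega)) (Set.mem_Iic.mpr (by omega)) (Nat.le_of_lt_succ hr)
  omega

theorem exists_flagIndex_eq_succ (h00 : dims 0 = 0) (p : Fin (dims (m + 1))) :
    ∃ s ≤ m, flagIndex m dims p = OrderDual.toDual (s + 1) := by
  obtain ⟨t, ht⟩ : ∃ t, flagIndex m dims p = OrderDual.toDual t := ⟨_, rfl⟩
  obtain ⟨hle, hlt⟩ := flagIndex_eq_toDual_iff.mp ht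
  have t_ne_zero : t ≠ 0 := by rintro rfl; omega
  have t_le : t ≤ m + 1 := by
    by_contra! h
    have := hlt (m + 1) h
    omega
  exact ⟨t - 1, by omega, by rwa [Nat.sub_add_cancel (by omega)]⟩

theorem flagIndex_lt_iff (h00 : dims 0 = 0) (hmono : MonotoneOn dims (Set.Iic (m + 1)))
    {p q : Fin (dims (m + 1))} :
    flagIndex m dims q < flagIndex m dims p ↔
      ∃ s, 1 ≤ s ∧ s ≤ m ∧ (q : ℕ) < dims (m + 1) - dims s ∧ dims (m + 1) - dims s ≤ (p : ℕ) := by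
  obtain ⟨s, hs, hps⟩ := exists_flagIndex_eq_succ h00 p
  obtain ⟨t, ht, hqt⟩ := exists_flagIndex_eq_succ h00 q
  rw [hps, hqt, OrderDual.toDual_lt_toDual]
  obtain ⟨hps, hps'⟩ := (flagIndex_eq_succ_iff hmono hs).mp hps
  obtain ⟨hqt, hqt'⟩ := (flagIndex_eq_succ_iff hmono ht).mp hqt
  constructor
  · intro hst
    have : dims (s + 1) ≤ dims t :=
      hmono (Set.mem_Iic.mpr (by omega)) (Set.mem_Iic.mpr (by omega)) (by omega)
    exact ⟨s + 1, by omega, by omega, by omega, hps⟩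
  · rintro ⟨r, -, hr, hqr, hpr⟩
    by_contra! hts
    rcases le_or_gt r s with hrs | hsr
    · have : dims r ≤ dims s :=
        hmono (Set.mem_Iic.mpr (by omega)) (Set.mem_Iic.mpr (by omega)) hrs
      omega
    · have : dims (t + 1) ≤ dims r :=
        hmono (Set.mem_Iic.mpr (by omega)) (Set.mem_Iic.mpr (by omega)) (by omega)
      omega

theorem blockTriangular_flagIndex_iff (h00 : dims 0 = 0)
    (hmono : MonotoneOn dims (Set.Iic (m + 1)))
    {M : Matrix (Fin (dims (m + 1))) (Fin (dims (m + 1))) R} :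
    BlockTriangular M (flagIndex m dims) ↔ FlagTriangular m dims M :=
  ⟨fun hM s hs hsm _ _ hq hp => hM ((flagIndex_lt_iff h00 hmono).mpr ⟨s, hs, hsm, hq, hp⟩),
    fun hM p q hpq =>
      have ⟨s, hs, hsm, hq, hp⟩ := (flagIndex_lt_iff h00 hmono).mp hpq
      hM s hs hsm p q hq hp⟩

theorem det_toSquareBlock_flagIndex_succ (hmono : MonotoneOn dims (Set.Iic (m + 1))) {s : ℕ}
    (hs : s ≤ m) (M : Matrix (Fin (dims (m + 1))) (Fin (dims (m + 1))) R) :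
    (M.toSquareBlock (flagIndex m dims) (OrderDual.toDual (s + 1))).det =
      (diagBlock (dims s) (dims_le_last hmono (Nat.succ_le_succ hs)) M).det := by
  have hle : dims (s + 1) ≤ dims (m + 1) := dims_le_last hmono (Nat.succ_le_succ hs)
  have : dims s ≤ dims (s + 1) := dims_le_succ hmono hs
  let toFibre (p : Fin (dims (s + 1) - dims s)) :
      {p // flagIndex m dims p = OrderDual.toDual (s + 1)} :=
    ⟨lastIndices hle (Fin.castLE (Nat.sub_le _ _) p), (flagIndex_eq_succ_iff hmono hs).mpr (by
      simp only [lastIndices, Fin.val_castLE]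
      omega)⟩
  have toFibre_bijective : Function.Bijective toFibre := by
    refine ⟨fun p q hpq => Fin.castLE_injective _ (lastIndices_injective hle
      (congrArg Subtype.val hpq)), fun ⟨p, hp⟩ => ?_⟩
    rw [flagIndex_eq_succ_iff hmono hs] at hp
    exact ⟨⟨p - (dims (m + 1) - dims (s + 1)), by omega⟩, Subtype.ext (Fin.ext (by
      simp only [toFibre, lastIndices, Fin.val_castLE]
      omega))⟩
  exact (det_submatrix_equiv_self (Equiv.ofBijective toFibre toFibre_bijective) _).symm

theorem forall_det_toSquareBlock_flagIndex_iff (h00 : dims 0 = 0)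
    (hmono : MonotoneOn dims (Set.Iic (m + 1)))
    {M : Matrix (Fin (dims (m + 1))) (Fin (dims (m + 1))) R} :
    (∀ k, (M.toSquareBlock (flagIndex m dims) k).det = 1) ↔ ∀ (s : ℕ) (hs : s ≤ m),
      (diagBlock (dims s) (dims_le_last hmono (Nat.succ_le_succ hs)) M).det = 1 := by
  refine ⟨fun hM s hs => by rw [← det_toSquareBlock_flagIndex_succ hmono hs, hM], fun hM k => ?_⟩
  by_cases hk : ∃ p, flagIndex m dims p = k
  · obtain ⟨p, rfl⟩ := hk
    obtain ⟨s, hs, hp⟩ := exists_flagIndex_eq_succ h00 p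
    rw [hp, det_toSquareBlock_flagIndex_succ hmono hs, hM s hs]
  · have : IsEmpty {p // flagIndex m dims p = k} := Subtype.isEmpty_of_false (not_exists.mp hk)
    exact det_isEmpty

variable (R) in
/-- The parabolic subgroup of `SL(dims (m + 1), R)` preserving the flag of `FlagTriangular`. -/
abbrev flagParabolic (m : ℕ) (dims : ℕ → ℕ) :
    Subgroup (SpecialLinearGroup (Fin (dims (m + 1))) R) :=
  blockParabolic R (flagIndex m dims)

theorem mem_commutator_flagParabolic_iff (hF : ∃ a : F, a ≠ 0 ∧ a ^ 2 ≠ 1) (h00 : dims 0 = 0)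
    (hmono : MonotoneOn dims (Set.Iic (m + 1)))
    {g : SpecialLinearGroup (Fin (dims (m + 1))) F} :
    g ∈ ⁅flagParabolic F m dims, flagParabolic F m dims⁆ ↔
      FlagTriangular m dims g.1 ∧ ∀ (s : ℕ) (hs : s ≤ m),
        (diagBlock (dims s) (dims_le_last hmono (Nat.succ_le_succ hs)) g.1).det = 1 := by
  rw [mem_commutator_blockParabolic_iff hF, blockTriangular_flagIndex_iff h00 hmono,
    forall_det_toSquareBlock_flagIndex_iff h00 hmono]

theorem exists_intertwiners_iff_flagTriangular (h00 : dims 0 = 0)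
    (hmono : MonotoneOn dims (Set.Iic (m + 1)))
    {g : SpecialLinearGroup (Fin (dims (m + 1))) R} :
    (∃ G : ∀ i, SpecialLinearGroup (Fin (dims i)) R, G (m + 1) = g ∧
        ∀ i, 1 ≤ i → i ≤ m → (G i).1 * stdProj R (dims i) (dims (i + 1)) =
          stdProj R (dims i) (dims (i + 1)) * (G (i + 1)).1) ↔
      FlagTriangular m dims g.1 ∧ ∀ (s : ℕ) (hs : s ≤ m),
        (diagBlock (dims s) (dims_le_last hmono (Nat.succ_le_succ hs)) g.1).det = 1 := by
  have : IsEmpty (Fin (dims 0)) := by rw [h00]; infer_instance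
  have forall_pos_iff (G : ∀ i, SpecialLinearGroup (Fin (dims i)) R) :
      (∀ i, 1 ≤ i → i ≤ m → (G i).1 * stdProj R (dims i) (dims (i + 1)) =
          stdProj R (dims i) (dims (i + 1)) * (G (i + 1)).1) ↔
        ∀ i ≤ m, (G i).1 * stdProj R (dims i) (dims (i + 1)) =
          stdProj R (dims i) (dims (i + 1)) * (G (i + 1)).1 :=
    ⟨fun hG i hi => i.eq_zero_or_pos.elim (by rintro rfl; exact Subsingleton.elim _ _)
      fun h => hG i h hi, fun hG i _ => hG i⟩
  simp only [forall_pos_iff, exists_intertwiners_iff hmono, forall_and]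
  rw [flagTriangular_iff_forall_le h00]
  exact and_congr_right fun hM => forall_det_corner_eq_one_iff h00 hmono hM

theorem statement3_general (hF : ∃ a : F, a ≠ 0 ∧ a ^ 2 ≠ 1) (h00 : dims 0 = 0)
    (hmono : MonotoneOn dims (Set.Iic (m + 1)))
    (g : SpecialLinearGroup (Fin (dims (m + 1))) F) :
    ((∃ G : ∀ i, SpecialLinearGroup (Fin (dims i)) F, G (m + 1) = g ∧
        ∀ i, 1 ≤ i → i ≤ m → (G i).1 * stdProj F (dims i) (dims (i + 1)) =
          stdProj F (dims i) (dims (i + 1)) * (G (i + 1)).1) ↔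
      g ∈ ⁅flagParabolic F m dims, flagParabolic F m dims⁆) ∧
    (g ∈ ⁅flagParabolic F m dims, flagParabolic F m dims⁆ ↔
      FlagTriangular m dims g.1 ∧ ∀ (s : ℕ) (hs : s ≤ m),
        (diagBlock (dims s) (dims_le_last hmono (Nat.succ_le_succ hs)) g.1).det = 1) := by
  rw [exists_intertwiners_iff_flagTriangular h00 hmono,
    mem_commutator_flagParabolic_iff hF h00 hmono]
  exact ⟨Iff.rfl, Iff.rfl⟩

theorem parabolicP_eq_flagParabolic (h00 : dims 0 = 0)
    (hmono : MonotoneOn dims (Set.Iic (m + 1))) : parabolicP m dims = flagParabolic ℂ m dims := by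
  rw [← Subgroup.closure_eq (flagParabolic ℂ m dims)]
  exact congrArg Subgroup.closure
    (Set.ext fun _ => (blockTriangular_flagIndex_iff h00 hmono).symm)

end Flag

/-- (Here the paper's `r` is `m + 1` and `n = dims (m+1)`,
with `0 = dims 0 < dims 1 < … < dims (m+1) = n`; the paper's `β_i`, for
`i = 1, …, r−1 = m`, is `stdBeta (dims i) (dims (i+1))`.)

For `g ∈ SL(n, ℂ)` the following are equivalent:
(a) there exist `g_i ∈ SL(dims i, ℂ)`, `i = 1, …, m`, with `g_i β_i = β_i g_{i+1}`
for all `i = 1, …, m` (where `g_{m+1} = g`);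
(b) `g` lies in the commutator subgroup `[P,P]` of the parabolic `P`;
equivalently (c) `g` is block upper triangular with respect to the flag and
each of its diagonal blocks has determinant `1`. -/
theorem statement3 (m : ℕ) (dims : ℕ → ℕ) (h00 : dims 0 = 0) (h1 : 0 < dims 1)
    (hmono : ∀ i, 1 ≤ i → i ≤ m → dims i < dims (i+1))
    (hub : ∀ i, i ≤ m + 1 → dims i ≤ dims (m+1))
    (g : Matrix.SpecialLinearGroup (Fin (dims (m+1))) ℂ) :
    ((∃ G : ∀ i : ℕ, Matrix.SpecialLinearGroup (Fin (dims i)) ℂ,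
        G (m+1) = g ∧
        ∀ i, 1 ≤ i → i ≤ m →
          (↑(G i) : Matrix (Fin (dims i)) (Fin (dims i)) ℂ) * stdBeta (dims i) (dims (i+1)) =
            stdBeta (dims i) (dims (i+1)) *
              (↑(G (i+1)) : Matrix (Fin (dims (i+1))) (Fin (dims (i+1))) ℂ)) ↔
      g ∈ ⁅parabolicP m dims, parabolicP m dims⁆) ∧
    (g ∈ ⁅parabolicP m dims, parabolicP m dims⁆ ↔
      (BlockUpperTriangularFlag m dims ↑g ∧
        ∀ s, ∀ hsm : s ≤ m,
          Matrix.det (Matrix.of fun p q : Fin (dims (s+1) - dims s) =>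
            (↑g : Matrix (Fin (dims (m+1))) (Fin (dims (m+1))) ℂ)
              ⟨dims (m+1) - dims (s+1) + (p : ℕ), by
                have hp := p.isLt; have hs := hub (s+1) (by omega); omega⟩
              ⟨dims (m+1) - dims (s+1) + (q : ℕ), by
                have hq := q.isLt; have hs := hub (s+1) (by omega); omega⟩) = 1)) := by
  have dims_monotoneOn : MonotoneOn dims (Set.Iic (m + 1)) := by
    refine monotoneOn_of_le_add_one Set.ordConnected_Iic fun i _ _ hi => ?_
    rcases i.eq_zero_or_pos with rfl | hpos
    · exact h00.trans_le (Nat.zero_le _)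
    · exact (hmono i hpos (Nat.le_of_succ_le_succ hi)).le
  rw [parabolicP_eq_flagParabolic h00 dims_monotoneOn]
  -- Over `ℂ`, `stdProj`, `FlagTriangular` and `diagBlock` unfold to the notions of the statement.
  exact statement3_general ⟨2, by norm_num⟩ h00 dims_monotoneOn g
end

section
/- Fix integers r ≥ 2 and 0 = n_0 ≤ n_1 ≤ … ≤ n_r = n, and a quiver (α, β). (1) If each α_i is injective and each β_i is surjective (for i = 1,…,r−1), then the orbit of (α, β) under ∏_{i=1}^{r−1} GL(n_i,ℂ) is a closed subset of the product matrix space, and the stabiliser is trivial. (2) If all α_i are injective, or all β_i are surjective, then the orbit of (α, β) under ∏_{i=1}^{r−1} SL(n_i,ℂ) is closed with trivial stabiliser. -/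
/-- The action of `(g_i) ∈ ∏ GL(dims i, ℂ)` on the maps `α` of a quiver:
`α_i ↦ g_{i+1} α_i g_i⁻¹`. -/
noncomputable def glActA (dims : ℕ → ℕ) (g : ∀ i : ℕ, Matrix.GeneralLinearGroup (Fin (dims i)) ℂ)
    (α : ∀ i : ℕ, Matrix (Fin (dims (i+1))) (Fin (dims i)) ℂ) :
    ∀ i : ℕ, Matrix (Fin (dims (i+1))) (Fin (dims i)) ℂ :=
  fun i => (↑(g (i+1)) : Matrix (Fin (dims (i+1))) (Fin (dims (i+1))) ℂ) * α i *
    (↑((g i)⁻¹) : Matrix (Fin (dims i)) (Fin (dims i)) ℂ)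

/-- The action of `(g_i) ∈ ∏ GL(dims i, ℂ)` on the maps `β` of a quiver:
`β_i ↦ g_i β_i g_{i+1}⁻¹`. -/
noncomputable def glActB (dims : ℕ → ℕ) (g : ∀ i : ℕ, Matrix.GeneralLinearGroup (Fin (dims i)) ℂ)
    (β : ∀ i : ℕ, Matrix (Fin (dims i)) (Fin (dims (i+1))) ℂ) :
    ∀ i : ℕ, Matrix (Fin (dims i)) (Fin (dims (i+1))) ℂ :=
  fun i => (↑(g i) : Matrix (Fin (dims i)) (Fin (dims i)) ℂ) * β i *
    (↑((g (i+1))⁻¹) : Matrix (Fin (dims (i+1))) (Fin (dims (i+1))) ℂ)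

/-- The action of `(g_i) ∈ ∏ SL(dims i, ℂ)` on the maps `α` of a quiver. -/
noncomputable def slActA (dims : ℕ → ℕ) (g : ∀ i : ℕ, Matrix.SpecialLinearGroup (Fin (dims i)) ℂ)
    (α : ∀ i : ℕ, Matrix (Fin (dims (i+1))) (Fin (dims i)) ℂ) :
    ∀ i : ℕ, Matrix (Fin (dims (i+1))) (Fin (dims i)) ℂ :=
  fun i => (↑(g (i+1)) : Matrix (Fin (dims (i+1))) (Fin (dims (i+1))) ℂ) * α i *
    (↑((g i)⁻¹) : Matrix (Fin (dims i)) (Fin (dims i)) ℂ)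

/-- The action of `(g_i) ∈ ∏ SL(dims i, ℂ)` on the maps `β` of a quiver. -/
noncomputable def slActB (dims : ℕ → ℕ) (g : ∀ i : ℕ, Matrix.SpecialLinearGroup (Fin (dims i)) ℂ)
    (β : ∀ i : ℕ, Matrix (Fin (dims i)) (Fin (dims (i+1))) ℂ) :
    ∀ i : ℕ, Matrix (Fin (dims i)) (Fin (dims (i+1))) ℂ :=
  fun i => (↑(g i) : Matrix (Fin (dims i)) (Fin (dims i)) ℂ) * β i *
    (↑((g (i+1))⁻¹) : Matrix (Fin (dims (i+1))) (Fin (dims (i+1))) ℂ)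

/-!
The group element can be read off continuously from the point of the orbit it produces. Suppose
`(α', β')` is the translate of `(α, β)` by `g`, where `g_{m+1} = 1`. If `L_i α_i = 1`, then
`g_i⁻¹ = L_i g_{i+1}⁻¹ α'_i`, so by descending induction on `i` every `g_i⁻¹` is a polynomial in
the entries of `α'`; likewise `g_i = β'_i g_{i+1} R_i` if `β_i R_i = 1`. Now `g ↦ (g, g⁻¹)` is a
closed embedding of `GL` into pairs of matrices, while for `SL` each of `g ↦ g` and `g ↦ g⁻¹` is
already a closed embedding into matrices. So the orbit map becomes a closed embedding after
composition with a continuous map out of a Hausdorff space; hence it is injective and proper, and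
its range is closed.
-/

open Matrix Topology

theorem exists_mul_eq_one_of_mulVecLin_injective {m n K : Type*} [Fintype m] [Fintype n]
    [DecidableEq n] [Field K] {A : Matrix m n K}
    (hA : Function.Injective A.mulVecLin) : ∃ L : Matrix n m K, L * A = 1 := by
  classical
  obtain ⟨f, hf⟩ := A.mulVecLin.exists_leftInverse_of_injective (LinearMap.ker_eq_bot.2 hA)
  refine ⟨LinearMap.toMatrix' f, ?_⟩
  calc LinearMap.toMatrix' f * A = LinearMap.toMatrix' (f ∘ₗ A.mulVecLin) := by
        rw [LinearMap.toMatrix'_comp, ← toLin'_apply', LinearMap.toMatrix'_toLin']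
    _ = 1 := by rw [hf, LinearMap.toMatrix'_id]

/-- Representations, on the free modules with bases `V i`, of the quiver with vertices `ℕ` and, for
each `i`, one arrow `i ⟶ i + 1` and one arrow `i + 1 ⟶ i`. The two components are the paper's `α`
and `β`. -/
abbrev DoubleChainRep (V : ℕ → Type*) (R : Type*) :=
  (∀ i, Matrix (V (i + 1)) (V i) R) × (∀ i, Matrix (V i) (V (i + 1)) R)

namespace DoubleChainRep

variable {V : ℕ → Type*} [∀ i, Fintype (V i)] [∀ i, DecidableEq (V i)]

section CommRing

variable {R : Type*} [CommRing R] {m : ℕ}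

/-- The base change action of `∏ GL (V i) R` on representations. -/
def act (g : ∀ i, GL (V i) R) (x : DoubleChainRep V R) : DoubleChainRep V R :=
  (fun i => (g (i + 1)).val * x.1 i * (g i)⁻¹.val, fun i => (g i).val * x.2 i * (g (i + 1))⁻¹.val)

section Recovery

variable [TopologicalSpace R] [IsTopologicalRing R] {x : DoubleChainRep V R}

lemma exists_continuous_act_eq_inv
    (hx : ∀ i ≤ m, ∃ L : Matrix (V i) (V (i + 1)) R, L * x.1 i = 1) {i : ℕ} (hi : i ≤ m + 1) :
    ∃ s : DoubleChainRep V R → Matrix (V i) (V i) R,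
      Continuous s ∧ ∀ g, g (m + 1) = 1 → s (act g x) = (g i)⁻¹.val := by
  induction hi using Nat.decreasingInduction with
  | self => exact ⟨fun _ => 1, continuous_const, fun g hg => by simp [hg]⟩
  | of_succ i hi ih =>
    obtain ⟨s, hs, hsg⟩ := ih
    obtain ⟨L, hL⟩ := hx i (Nat.lt_succ_iff.1 hi)
    refine ⟨fun q => L * s q * q.1 i, by fun_prop, fun g hg => ?_⟩
    calc L * s (act g x) * (act g x).1 i
        = L * ((g (i + 1))⁻¹.val * (g (i + 1)).val) * x.1 i * (g i)⁻¹.val := by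
          rw [hsg g hg]; simp only [act, Matrix.mul_assoc]
      _ = (g i)⁻¹.val := by rw [Units.inv_mul, Matrix.mul_one, hL, Matrix.one_mul]

lemma exists_continuous_act_eq
    (hx : ∀ i ≤ m, ∃ T : Matrix (V (i + 1)) (V i) R, x.2 i * T = 1) {i : ℕ} (hi : i ≤ m + 1) :
    ∃ s : DoubleChainRep V R → Matrix (V i) (V i) R,
      Continuous s ∧ ∀ g, g (m + 1) = 1 → s (act g x) = (g i).val := by
  induction hi using Nat.decreasingInduction with
  | self => exact ⟨fun _ => 1, continuous_const, fun g hg => by simp [hg]⟩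
  | of_succ i hi ih =>
    obtain ⟨s, hs, hsg⟩ := ih
    obtain ⟨T, hT⟩ := hx i (Nat.lt_succ_iff.1 hi)
    refine ⟨fun q => q.2 i * s q * T, by fun_prop, fun g hg => ?_⟩
    calc (act g x).2 i * s (act g x) * T
        = (g i).val * (x.2 i * (((g (i + 1))⁻¹.val * (g (i + 1)).val) * T)) := by
          rw [hsg g hg]; simp only [act, Matrix.mul_assoc]
      _ = (g i).val := by rw [Units.inv_mul, Matrix.one_mul, hT, Matrix.mul_one]

end Recovery

variable {G : ℕ → Type*} [∀ i, Group (G i)]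

/-- The family `g` on the vertices `≤ m`, continued by the identity beyond `m`. -/
def extendByOne (g : ∀ i : Set.Iic m, G i) (i : ℕ) : G i :=
  if h : i ≤ m then g ⟨i, h⟩ else 1

lemma extendByOne_of_le (g : ∀ i : Set.Iic m, G i) {i : ℕ} (hi : i ≤ m) :
    extendByOne g i = g ⟨i, hi⟩ :=
  dif_pos hi

lemma extendByOne_of_lt (g : ∀ i : Set.Iic m, G i) {i : ℕ} (hi : m < i) : extendByOne g i = 1 :=
  dif_neg hi.not_ge

lemma extendByOne_one : extendByOne (1 : ∀ i : Set.Iic m, G i) = 1 := by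
  ext i
  simp [extendByOne]

lemma continuous_extendByOne [∀ i, TopologicalSpace (G i)] :
    Continuous (extendByOne : (∀ i : Set.Iic m, G i) → ∀ i, G i) := by
  refine continuous_pi fun i => ?_
  by_cases hi : i ≤ m
  · simpa only [extendByOne_of_le _ hi] using continuous_apply _
  · simpa only [extendByOne_of_lt _ (not_le.1 hi)] using continuous_const

/-- The orbit map of `x` for the group `∏_{i ≤ m} G i`, acting through homomorphisms
`φ i : G i →* GL (V i) R`. -/
def orbitMap (m : ℕ) (φ : ∀ i, G i →* GL (V i) R) (x : DoubleChainRep V R)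
    (g : ∀ i : Set.Iic m, G i) : DoubleChainRep V R :=
  act (fun i => φ i (extendByOne g i)) x

/-- The orbit of `x` under `∏_{i ≤ m} G i`, presented by families `g` indexed by all of `ℕ` of which
only the members `g 0, …, g m` matter: `g (m + 1) = 1`, and the arrows beyond `m` are fixed. -/
def framedOrbit (m : ℕ) (φ : ∀ i, G i →* GL (V i) R) (x : DoubleChainRep V R) :
    Set (DoubleChainRep V R) :=
  {q | ∃ g : ∀ i, G i, g (m + 1) = 1 ∧
    (∀ i ≤ m, q.1 i = (act (fun j => φ j (g j)) x).1 i ∧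
      q.2 i = (act (fun j => φ j (g j)) x).2 i) ∧
    (∀ i, m + 1 ≤ i → q.1 i = x.1 i ∧ q.2 i = x.2 i)}

/-- Triviality of the stabiliser of `x` in `∏_{1 ≤ i ≤ m} G i`, in terms of families `g` indexed by
all of `ℕ`, as in `framedOrbit`. -/
def HasTrivialFramedStabilizer (m : ℕ) (φ : ∀ i, G i →* GL (V i) R) (x : DoubleChainRep V R) :
    Prop :=
  ∀ g : ∀ i, G i, g (m + 1) = 1 →
    (∀ i ≤ m, (act (fun j => φ j (g j)) x).1 i = x.1 i ∧
      (act (fun j => φ j (g j)) x).2 i = x.2 i) →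
    ∀ i, 1 ≤ i → i ≤ m → g i = 1

variable {φ : ∀ i, G i →* GL (V i) R} {x q : DoubleChainRep V R}

lemma orbitMap_one : orbitMap m φ x 1 = x := by
  simp [orbitMap, act, extendByOne_one]

lemma eq_orbitMap_restrict_iff {g : ∀ i, G i} (hg : g (m + 1) = 1) :
    q = orbitMap m φ x (fun i => g i) ↔
      (∀ i ≤ m, q.1 i = (act (fun j => φ j (g j)) x).1 i ∧
        q.2 i = (act (fun j => φ j (g j)) x).2 i) ∧
      (∀ i, m + 1 ≤ i → q.1 i = x.1 i ∧ q.2 i = x.2 i) := by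
  set g' : ∀ i, G i := extendByOne fun i : Set.Iic m => g i
  have g'_of_le (i : ℕ) (hi : i ≤ m + 1) : g' i = g i := by
    rcases Nat.le_succ_iff.1 hi with hi | rfl
    · exact extendByOne_of_le _ hi
    · exact (extendByOne_of_lt _ m.lt_succ_self).trans hg.symm
  have g'_of_lt (i : ℕ) (hi : m < i) : g' i = 1 := extendByOne_of_lt _ hi
  have act_of_le (i : ℕ) (hi : i ≤ m) :
      (act (fun j => φ j (g' j)) x).1 i = (act (fun j => φ j (g j)) x).1 i ∧
        (act (fun j => φ j (g' j)) x).2 i = (act (fun j => φ j (g j)) x).2 i := by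
    simp only [act, g'_of_le i (by omega), g'_of_le (i + 1) (by omega), and_self]
  have act_of_lt (i : ℕ) (hi : m < i) :
      (act (fun j => φ j (g' j)) x).1 i = x.1 i ∧ (act (fun j => φ j (g' j)) x).2 i = x.2 i := by
    simp [act, g'_of_lt i hi, g'_of_lt (i + 1) (by omega)]
  constructor
  · rintro rfl
    exact ⟨act_of_le, act_of_lt⟩
  · rintro ⟨h_le, h_lt⟩
    suffices ∀ i, q.1 i = (act (fun j => φ j (g' j)) x).1 i ∧
        q.2 i = (act (fun j => φ j (g' j)) x).2 i from
      Prod.ext (funext fun i => (this i).1) (funext fun i => (this i).2)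
    intro i
    rcases le_or_gt i m with hi | hi
    · rw [(act_of_le i hi).1, (act_of_le i hi).2]
      exact h_le i hi
    · rw [(act_of_lt i hi).1, (act_of_lt i hi).2]
      exact h_lt i hi

lemma framedOrbit_eq_range_orbitMap : framedOrbit m φ x = Set.range (orbitMap m φ x) := by
  ext q
  constructor
  · rintro ⟨g, hg, hq⟩
    exact ⟨_, ((eq_orbitMap_restrict_iff hg).2 hq).symm⟩
  · rintro ⟨g, rfl⟩
    have restrict_extend : (fun i : Set.Iic m => extendByOne g i) = g :=
      funext fun i => extendByOne_of_le g i.2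
    have hg : extendByOne g (m + 1) = 1 := extendByOne_of_lt g m.lt_succ_self
    exact ⟨extendByOne g, hg, (eq_orbitMap_restrict_iff hg).1 (by rw [restrict_extend])⟩

lemma hasTrivialFramedStabilizer_of_injective (h : Function.Injective (orbitMap m φ x)) :
    HasTrivialFramedStabilizer m φ x := by
  intro g hg hgx i _ hi
  have fixes : orbitMap m φ x (fun i => g i) = x :=
    ((eq_orbitMap_restrict_iff hg).2
      ⟨fun i hi => ⟨(hgx i hi).1.symm, (hgx i hi).2.symm⟩, fun _ _ => ⟨rfl, rfl⟩⟩).symm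
  exact congrFun (h (fixes.trans orbitMap_one.symm)) ⟨i, hi⟩

lemma apply_orbitMap {Z : Type*} {i : Set.Iic m} {s : DoubleChainRep V R → Z}
    (c : GL (V i) R → Z) (hs : ∀ g, g (m + 1) = 1 → s (act g x) = c (g i))
    (g : ∀ i : Set.Iic m, G i) : s (orbitMap m φ x g) = c (φ i (g i)) := by
  have hg : φ (m + 1) (extendByOne g (m + 1)) = 1 := by
    rw [extendByOne_of_lt g m.lt_succ_self, map_one]
  rw [orbitMap, hs _ hg, extendByOne_of_le g i.2]

variable [TopologicalSpace R] [IsTopologicalRing R]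

lemma continuous_act (x : DoubleChainRep V R) : Continuous fun g => act g x := by
  unfold act
  fun_prop

lemma continuous_orbitMap [∀ i, TopologicalSpace (G i)] (hφ : ∀ i, Continuous (φ i)) :
    Continuous (orbitMap m φ x) :=
  (continuous_act x).comp <| (Continuous.piMap hφ).comp continuous_extendByOne

theorem isClosed_framedOrbit_and_hasTrivialFramedStabilizer_of_isClosedEmbedding [T2Space R]
    [∀ i, TopologicalSpace (G i)] (hφ : ∀ i, Continuous (φ i))
    {Y : Set.Iic m → Type*} [∀ i, TopologicalSpace (Y i)] (c : ∀ i : Set.Iic m, GL (V i) R → Y i)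
    (hc : ∀ i, IsClosedEmbedding (c i ∘ φ i))
    (hs : ∀ i, ∃ s : DoubleChainRep V R → Y i,
      Continuous s ∧ ∀ g, g (m + 1) = 1 → s (act g x) = c i (g i)) :
    IsClosed (framedOrbit m φ x) ∧ HasTrivialFramedStabilizer m φ x := by
  choose s s_cont s_act using hs
  have emb : IsClosedEmbedding ((fun q i => s i q) ∘ orbitMap m φ x) := by
    convert IsClosedEmbedding.piMap hc using 1
    exact funext fun g => funext fun i => apply_orbitMap (c i) (s_act i) g
  have proper : IsProperMap (orbitMap m φ x) :=
    isProperMap_of_comp_of_t2 (continuous_orbitMap hφ) (continuous_pi s_cont) emb.isProperMap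
  exact ⟨by simpa only [framedOrbit_eq_range_orbitMap] using proper.isClosedMap.isClosed_range,
    hasTrivialFramedStabilizer_of_injective emb.injective.of_comp⟩

variable [T2Space R]

theorem isClosed_framedOrbit_and_hasTrivialFramedStabilizer_gl
    (hα : ∀ i ≤ m, ∃ L : Matrix (V i) (V (i + 1)) R, L * x.1 i = 1)
    (hβ : ∀ i ≤ m, ∃ T : Matrix (V (i + 1)) (V i) R, x.2 i * T = 1) :
    IsClosed (framedOrbit m (fun i => MonoidHom.id (GL (V i) R)) x) ∧
      HasTrivialFramedStabilizer m (fun i => MonoidHom.id (GL (V i) R)) x := by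
  refine isClosed_framedOrbit_and_hasTrivialFramedStabilizer_of_isClosedEmbedding
    (fun _ => continuous_id) (fun i => Units.embedProduct (Matrix (V i) (V i) R))
    (fun _ => Units.isClosedEmbedding_embedProduct) fun i => ?_
  have hi : (i : ℕ) ≤ m + 1 := Nat.le_succ_of_le i.2
  obtain ⟨s, s_cont, hs⟩ := exists_continuous_act_eq hβ hi
  obtain ⟨t, t_cont, ht⟩ := exists_continuous_act_eq_inv hα hi
  exact ⟨fun q => (s q, .op (t q)), by fun_prop,
    fun g hg => Prod.ext (hs g hg) (congrArg MulOpposite.op (ht g hg))⟩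

theorem isClosed_framedOrbit_and_hasTrivialFramedStabilizer_sl
    (h : (∀ i ≤ m, ∃ L : Matrix (V i) (V (i + 1)) R, L * x.1 i = 1) ∨
      ∀ i ≤ m, ∃ T : Matrix (V (i + 1)) (V i) R, x.2 i * T = 1) :
    IsClosed (framedOrbit m (fun i => SpecialLinearGroup.toGL (n := V i) (R := R)) x) ∧
      HasTrivialFramedStabilizer m (fun i => SpecialLinearGroup.toGL (n := V i) (R := R)) x := by
  have toGL_cont (i : ℕ) : Continuous (SpecialLinearGroup.toGL (n := V i) (R := R)) :=
    SpecialLinearGroup.continuous_toGL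
  rcases h with hα | hβ
  · exact isClosed_framedOrbit_and_hasTrivialFramedStabilizer_of_isClosedEmbedding toGL_cont
      (fun _ u => u⁻¹.val)
      (fun i => SpecialLinearGroup.isClosedEmbedding_val.comp
        (Homeomorph.inv (SpecialLinearGroup (V i) R)).isClosedEmbedding)
      fun i => exists_continuous_act_eq_inv hα (Nat.le_succ_of_le i.2)
  · exact isClosed_framedOrbit_and_hasTrivialFramedStabilizer_of_isClosedEmbedding toGL_cont
      (fun _ u => u.val) (fun _ => SpecialLinearGroup.isClosedEmbedding_val)
      fun i => exists_continuous_act_eq hβ (Nat.le_succ_of_le i.2)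

end CommRing

section EmptyVertex

variable {m : ℕ} [IsEmpty (V 0)]

lemma exists_left_inverse_of_injective {K : Type*} [Field K] {x : DoubleChainRep V K}
    (h : ∀ i, 1 ≤ i → i ≤ m → Function.Injective (x.1 i).mulVecLin) (i : ℕ) (hi : i ≤ m) :
    ∃ L : Matrix (V i) (V (i + 1)) K, L * x.1 i = 1 := by
  rcases i.eq_zero_or_pos with rfl | hpos
  · exact ⟨0, Subsingleton.elim _ _⟩
  · exact exists_mul_eq_one_of_mulVecLin_injective (h i hpos hi)

lemma exists_right_inverse_of_surjective {R : Type*} [CommRing R] {x : DoubleChainRep V R}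
    (h : ∀ i, 1 ≤ i → i ≤ m → Function.Surjective (x.2 i).mulVecLin) (i : ℕ) (hi : i ≤ m) :
    ∃ T : Matrix (V (i + 1)) (V i) R, x.2 i * T = 1 := by
  rcases i.eq_zero_or_pos with rfl | hpos
  · exact ⟨0, Subsingleton.elim _ _⟩
  · exact mulVec_surjective_iff_exists_right_inverse.1 (h i hpos hi)

end EmptyVertex

end DoubleChainRep

open DoubleChainRep in
theorem statement13_general {K : Type*} [Field K] [TopologicalSpace K] [IsTopologicalRing K]
    [T2Space K] {V : ℕ → Type*} [∀ i, Fintype (V i)] [∀ i, DecidableEq (V i)] [IsEmpty (V 0)]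
    (m : ℕ) (x : DoubleChainRep V K) :
    ((∀ i, 1 ≤ i → i ≤ m →
        Function.Injective (x.1 i).mulVecLin ∧ Function.Surjective (x.2 i).mulVecLin) →
      IsClosed (framedOrbit m (fun i => MonoidHom.id (GL (V i) K)) x) ∧
        HasTrivialFramedStabilizer m (fun i => MonoidHom.id (GL (V i) K)) x) ∧
    (((∀ i, 1 ≤ i → i ≤ m → Function.Injective (x.1 i).mulVecLin) ∨
        (∀ i, 1 ≤ i → i ≤ m → Function.Surjective (x.2 i).mulVecLin)) →
      IsClosed (framedOrbit m (fun i => SpecialLinearGroup.toGL (n := V i) (R := K)) x) ∧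
        HasTrivialFramedStabilizer m (fun i => SpecialLinearGroup.toGL (n := V i) (R := K)) x) :=
  ⟨fun h => isClosed_framedOrbit_and_hasTrivialFramedStabilizer_gl
      (exists_left_inverse_of_injective fun i h1 hm => (h i h1 hm).1)
      (exists_right_inverse_of_surjective fun i h1 hm => (h i h1 hm).2),
    fun h => isClosed_framedOrbit_and_hasTrivialFramedStabilizer_sl
      (h.imp exists_left_inverse_of_injective exists_right_inverse_of_surjective)⟩

/-- (Here the paper's `r` is `m + 1`, so `r ≥ 2` is `1 ≤ m`;
the quiver maps are `α i : ℂ^(dims i) → ℂ^(dims (i+1))` and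
`β i : ℂ^(dims (i+1)) → ℂ^(dims i)` for `i = 0, …, m`, with `dims 0 = 0`.
The group element acts with `g_{m+1} = 1`, and the components of index `> m`
are unaffected.)

(1) If each `α_i` is injective and each `β_i` is surjective (`i = 1, …, m`),
then the orbit of `(α, β)` under `∏_{i=1}^{m} GL(dims i, ℂ)` is closed in the
product matrix space and the stabiliser is trivial.
(2) If all the `α_i` are injective, or all the `β_i` are surjective, then the
orbit of `(α, β)` under `∏_{i=1}^{m} SL(dims i, ℂ)` is closed with trivial
stabiliser. -/
theorem statement13 (m : ℕ) (hm : 1 ≤ m) (dims : ℕ → ℕ) (h0 : dims 0 = 0)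
    (hmono : ∀ i ≤ m, dims i ≤ dims (i+1))
    (α : ∀ i : ℕ, Matrix (Fin (dims (i+1))) (Fin (dims i)) ℂ)
    (β : ∀ i : ℕ, Matrix (Fin (dims i)) (Fin (dims (i+1))) ℂ) :
    ((∀ i, 1 ≤ i → i ≤ m →
        Function.Injective (α i).mulVecLin ∧ Function.Surjective (β i).mulVecLin) →
      (IsClosed {q : (∀ i : ℕ, Matrix (Fin (dims (i+1))) (Fin (dims i)) ℂ) ×
            (∀ i : ℕ, Matrix (Fin (dims i)) (Fin (dims (i+1))) ℂ) |
          ∃ g : ∀ i : ℕ, Matrix.GeneralLinearGroup (Fin (dims i)) ℂ,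
            g (m+1) = 1 ∧
            (∀ i ≤ m, q.1 i = glActA dims g α i ∧ q.2 i = glActB dims g β i) ∧
            (∀ i, m + 1 ≤ i → q.1 i = α i ∧ q.2 i = β i)} ∧
        (∀ g : ∀ i : ℕ, Matrix.GeneralLinearGroup (Fin (dims i)) ℂ,
          g (m+1) = 1 →
          (∀ i ≤ m, glActA dims g α i = α i ∧ glActB dims g β i = β i) →
          ∀ i, 1 ≤ i → i ≤ m → g i = 1))) ∧
    (((∀ i, 1 ≤ i → i ≤ m → Function.Injective (α i).mulVecLin) ∨
        (∀ i, 1 ≤ i → i ≤ m → Function.Surjective (β i).mulVecLin)) →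
      (IsClosed {q : (∀ i : ℕ, Matrix (Fin (dims (i+1))) (Fin (dims i)) ℂ) ×
            (∀ i : ℕ, Matrix (Fin (dims i)) (Fin (dims (i+1))) ℂ) |
          ∃ g : ∀ i : ℕ, Matrix.SpecialLinearGroup (Fin (dims i)) ℂ,
            g (m+1) = 1 ∧
            (∀ i ≤ m, q.1 i = slActA dims g α i ∧ q.2 i = slActB dims g β i) ∧
            (∀ i, m + 1 ≤ i → q.1 i = α i ∧ q.2 i = β i)} ∧
        (∀ g : ∀ i : ℕ, Matrix.SpecialLinearGroup (Fin (dims i)) ℂ,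
          g (m+1) = 1 →
          (∀ i ≤ m, slActA dims g α i = α i ∧ slActB dims g β i = β i) →
          ∀ i, 1 ≤ i → i ≤ m → g i = 1))) := by
  have : IsEmpty (Fin (dims 0)) := by rw [h0]; infer_instance
  exact statement13_general (V := fun i => Fin (dims i)) m (α, β)
end

section
/- Fix integers r ≥ 2 and 0 = n_0 ≤ n_1 ≤ … ≤ n_r = n, and a quiver (α, β) satisfying the equations α_{i−1} β_{i−1} = β_i α_i for all i = 1,…,r−1 (with α_0 = β_0 = 0), i.e., the complex moment map equations at level zero for ∏_{i=1}^{r−1} GL(n_i,ℂ). Then the orbit of (α, β) under the action of ∏_{i=1}^{r−1} GL(n_i,ℂ) is a closed subset of the product matrix space if and only if for every i = 1,…,r−1 the space ℂ^{n_i} is the internal direct sum of ker α_i and the range of β_i (i.e., ker α_i ∩ range β_i = 0 and ker α_i + range β_i = ℂ^{n_i}); equivalently, the quiver is the direct sum of a subquiver in which all the maps α are injective and all the maps β are surjective, and a subquiver in which all maps are zero. -/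
/-!
Call `p` split at node `i` if `ker α_i` and `range β_i` are complementary. This is a condition on
ranks: `rank (α_i β_i) = rank α_i = rank β_i`.

Suppose that `p` is split at every node, and that `q` satisfies the moment map equations, has the
same composite `α_m β_m` at the fixed last node, and has matrices of at most the ranks of those
of `p`. An intertwiner from `p` to `q` at node `i + 1` carries `α_i β_i` to its counterpart in `q`,
so the rank bounds force `q` to be split at node `i`, and the intertwiner extends to node `i`. The
moment map equation carries the induction one node further down. So the orbit of `p` is cut out by
closed conditions.

Conversely, the moment map equations make `range β_i` for `i ≤ j`, together with the whole space
for `i > j`, a subrepresentation. Rescaling its complement by `t⁻¹` and letting `t → 0` degenerates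
`α_j` to a matrix of rank at most `rank (α_j β_j)`. If the orbit is closed, the limit lies in it, so
`rank (α_j β_j) = rank α_j`; transposing the quiver gives `rank (α_j β_j) = rank β_j`.
-/

section LinearAlgebra

open LinearMap

variable {K : Type*} [Field K]

/-- The equivalence is glued from `g : range a ≃ range a'` and an arbitrary `ker a ≃ ker a'`. -/
theorem exists_linearEquiv_intertwining {U U' V V' : Type*}
    [AddCommGroup U] [Module K U] [FiniteDimensional K U]
    [AddCommGroup U'] [Module K U'] [FiniteDimensional K U']
    [AddCommGroup V] [Module K V] [AddCommGroup V'] [Module K V']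
    {a : U →ₗ[K] V} {b : V →ₗ[K] U} {a' : U' →ₗ[K] V'} {b' : V' →ₗ[K] U'}
    (hU : Module.finrank K U = Module.finrank K U')
    (hab : IsCompl (ker a) (range b)) (hab' : IsCompl (ker a') (range b'))
    (g : V ≃ₗ[K] V') (hg : ∀ y, g (a (b y)) = a' (b' (g y))) :
    ∃ h : U ≃ₗ[K] U', (∀ x, g (a x) = a' (h x)) ∧ ∀ y, h (b y) = b' (g y) := by
  have map_range : (range a).map (g : V →ₗ[K] V') = range a' := by
    rw [← Submodule.map_eq_range_iff.2 hab.codisjoint.symm,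
      ← Submodule.map_eq_range_iff.2 hab'.codisjoint.symm,
      ← range_comp, ← range_comp, ← range_comp, ← range_comp_of_range_eq_top (a' ∘ₗ b') g.range]
    exact congrArg range (LinearMap.ext hg)
  let eRange := g.ofSubmodules _ _ map_range
  have finrank_ker : Module.finrank K (ker a) = Module.finrank K (ker a') := by
    have := finrank_range_add_finrank_ker a
    have := finrank_range_add_finrank_ker a'
    have := eRange.finrank_eq
    omega
  let eKer := LinearEquiv.ofFinrankEq _ _ finrank_ker
  let split := equivProdOfSurjectiveOfIsCompl a.rangeRestrict
    (Submodule.projectionOnto _ _ hab) (by simp) (by simp) (by simpa using hab)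
  let split' := equivProdOfSurjectiveOfIsCompl a'.rangeRestrict
    (Submodule.projectionOnto _ _ hab') (by simp) (by simp) (by simpa using hab')
  let h := split.trans ((eRange.prodCongr eKer).trans split'.symm)
  have split'_h (x : U) : split' (h x) = (eRange (split x).1, eKer (split x).2) :=
    split'.apply_symm_apply _
  refine ⟨h, fun x ↦ (congrArg (fun z ↦ (z.1 : V')) (split'_h x)).symm, fun y ↦ ?_⟩
  apply split'.injective
  rw [split'_h]
  ext
  · exact hg y
  · have hb := Submodule.projectionOnto_apply_of_mem_right hab (mem_range_self b y)
    have hb' := Submodule.projectionOnto_apply_of_mem_right hab' (mem_range_self b' (g y))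
    simp [split, split', hb, hb']

end LinearAlgebra

section GeneralLinearGroup

open Matrix

variable {R : Type*} [CommRing R] {l m n : Type*} [Fintype m] [Fintype n]
  [DecidableEq m] [DecidableEq n]

theorem rank_conj (g : GL m R) (A : Matrix m n R) (h : GL n R) :
    (g.val * A * (h⁻¹).val).rank = A.rank := by
  rw [rank_mul_eq_left_of_isUnit_det _ _ ((isUnit_iff_isUnit_det _).1 h⁻¹.isUnit),
    rank_mul_eq_right_of_isUnit_det _ _ ((isUnit_iff_isUnit_det _).1 g.isUnit)]

theorem eq_mul_coe_inv_iff {A B : Matrix l m R} {g : GL m R} :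
    A = B * (g⁻¹).val ↔ A * g.val = B := by
  constructor <;> rintro rfl <;> simp [Matrix.mul_assoc]

/-- Invertible matrices as linear automorphisms of the space of column vectors. -/
noncomputable def mulVecEquiv (m R : Type*) [CommRing R] [Fintype m] [DecidableEq m] :
    GL m R ≃* ((m → R) ≃ₗ[R] (m → R)) :=
  GeneralLinearGroup.toLin.trans (LinearMap.GeneralLinearGroup.generalLinearEquiv R (m → R))

theorem mulVecEquiv_apply (g : GL m R) (x : m → R) : mulVecEquiv m R g x = g.val *ᵥ x :=
  rfl

/-- The automorphism `P + s (1 - P)` attached to an idempotent `P`, which acts as the identity on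
the range of `P` and as the scalar `s` on its kernel. -/
noncomputable def idempotentScaling (P : Matrix m m R) (hP : IsIdempotentElem P) (s : Rˣ) :
    GL m R where
  val := P + (s : R) • (1 - P)
  inv := P + ((s⁻¹ : Rˣ) : R) • (1 - P)
  val_inv := by
    simp [mul_add, add_mul, hP.eq, hP.one_sub.eq, hP.mul_one_sub_self, hP.one_sub_mul_self,
      smul_smul]
  inv_val := by
    simp [mul_add, add_mul, hP.eq, hP.one_sub.eq, hP.mul_one_sub_self, hP.one_sub_mul_self,
      smul_smul]

theorem idempotentScaling_inv_mul_mul_inv {P : Matrix m m R} {Q : Matrix n n R}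
    (hP : IsIdempotentElem P) (hQ : IsIdempotentElem Q) {A : Matrix m n R}
    (hA : P * A * Q = A * Q) (t : Rˣ) :
    (idempotentScaling P hP t⁻¹).val * A * ((idempotentScaling Q hQ t⁻¹)⁻¹).val =
      A + ((t : R) - 1) • (P * A * (1 - Q)) := by
  change (P + ((t⁻¹ : Rˣ) : R) • (1 - P)) * A * (Q + ((t⁻¹⁻¹ : Rˣ) : R) • (1 - Q)) = _
  simp only [inv_inv, Matrix.add_mul, Matrix.mul_add, Matrix.smul_mul, Matrix.mul_smul,
    Matrix.sub_mul, Matrix.mul_sub, Matrix.one_mul, Matrix.mul_one, hA, smul_sub]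
  match_scalars <;> simp [mul_add] <;> ring

/-- The inverse transpose of an invertible matrix. -/
def contragredient (g : GL m R) : GL m R where
  val := (g⁻¹).valᵀ
  inv := g.valᵀ
  val_inv := by rw [← transpose_mul, Units.mul_inv, transpose_one]
  inv_val := by rw [← transpose_mul, Units.inv_mul, transpose_one]

theorem contragredient_one : contragredient (1 : GL m R) = 1 :=
  Units.ext (by simp [contragredient])

end GeneralLinearGroup

section Matrix

open Matrix

variable {K : Type*} [Field K] {l m n : Type*} [Fintype m] [Fintype n]

theorem rank_mul_eq_left_iff_codisjoint (A : Matrix l m K) (B : Matrix m n K) :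
    (A * B).rank = A.rank ↔ Codisjoint A.mulVecLin.ker B.mulVecLin.range := by
  rw [codisjoint_comm, ← Submodule.map_eq_range_iff, ← LinearMap.range_comp, ← mulVecLin_mul]
  refine ⟨Submodule.eq_of_le_of_finrank_eq ?_, congrArg fun S : Submodule K _ ↦ Module.finrank K S⟩
  rw [mulVecLin_mul]
  exact LinearMap.range_comp_le_range _ _

theorem rank_mul_eq_right_iff_disjoint (A : Matrix l m K) (B : Matrix m n K) :
    (A * B).rank = B.rank ↔ Disjoint A.mulVecLin.ker B.mulVecLin.range := by
  rw [rank, rank, mulVecLin_mul, LinearMap.range_comp, disjoint_comm]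
  refine ⟨fun h ↦ Submodule.disjoint_ker_of_finrank_le _ h.ge, fun h ↦ ?_⟩
  rw [← LinearMap.range_domRestrict]
  exact LinearMap.finrank_range_of_inj (LinearMap.injective_domRestrict_iff.2 h)

theorem isCompl_ker_range_iff_rank_mul (A : Matrix l m K) (B : Matrix m n K) :
    IsCompl A.mulVecLin.ker B.mulVecLin.range ↔
      (A * B).rank = A.rank ∧ (A * B).rank = B.rank := by
  rw [isCompl_iff, ← rank_mul_eq_right_iff_disjoint, ← rank_mul_eq_left_iff_codisjoint, and_comm]

theorem exists_mul_mul_self_eq (B : Matrix m n K) : ∃ S : Matrix n m K, B * S * B = B := by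
  classical
  let f := toLin' B
  obtain ⟨s, hs⟩ := f.rangeRestrict.exists_rightInverse_of_surjective f.range_rangeRestrict
  obtain ⟨S, hS⟩ := s.exists_extend
  refine ⟨LinearMap.toMatrix' S, toLin'.injective (LinearMap.ext fun x ↦ ?_)⟩
  have hSf : S (f x) = s (f.rangeRestrict x) := LinearMap.congr_fun hS (f.rangeRestrict x)
  have hfs : f (s (f.rangeRestrict x)) = f x :=
    congrArg Subtype.val (LinearMap.congr_fun hs (f.rangeRestrict x))
  simp only [toLin'_mul, toLin'_toMatrix', LinearMap.comp_apply]
  exact (congrArg f hSf).trans hfs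

theorem exists_generalLinearGroup_intertwining [DecidableEq m] [DecidableEq n]
    {A A' : Matrix n m K} {B B' : Matrix m n K}
    (hAB : IsCompl A.mulVecLin.ker B.mulVecLin.range)
    (hAB' : IsCompl A'.mulVecLin.ker B'.mulVecLin.range)
    (g : GL n K) (hg : g.val * (A * B) = A' * B' * g.val) :
    ∃ h : GL m K, g.val * A = A' * h.val ∧ h.val * B = B' * g.val := by
  obtain ⟨e, hA, hB⟩ := exists_linearEquiv_intertwining rfl hAB hAB' (mulVecEquiv n K g) fun y ↦ by
    simpa [mulVecEquiv_apply, Matrix.mul_assoc] using congrArg (· *ᵥ y) hg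
  obtain ⟨h, rfl⟩ := (mulVecEquiv m K).surjective e
  refine ⟨h, ext_of_mulVec_single fun j ↦ ?_, ext_of_mulVec_single fun j ↦ ?_⟩
  · simpa only [mulVecEquiv_apply, mulVecLin_apply, mulVec_mulVec] using hA (Pi.single j 1)
  · simpa only [mulVecEquiv_apply, mulVecLin_apply, mulVec_mulVec] using hB (Pi.single j 1)

end Matrix

section RankTopology

variable {K : Type*} [NontriviallyNormedField K] [CompleteSpace K]

theorem isClosed_setOf_rank_le {m n : Type*} [Finite m] [Fintype n] (r : ℕ) :
    IsClosed {A : Matrix m n K | A.rank ≤ r} := by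
  classical
  cases nonempty_fintype m
  let toCLM : Matrix m n K →ₗ[K] (n → K) →L[K] (m → K) :=
    LinearMap.toContinuousLinearMap.toLinearMap ∘ₗ Matrix.toLin'.toLinearMap
  have rank_toCLM (A : Matrix m n K) : (toCLM A).toLinearMap.rank = A.rank :=
    (Module.finrank_eq_rank K A.mulVecLin.range).symm
  have isOpen_lt_rank := (isOpen_setOfPred_nat_le_rank (𝕜 := K) (E := n → K) (F := m → K)
    (r + 1)).preimage toCLM.continuous_of_finiteDimensional
  convert isOpen_lt_rank.isClosed_compl using 1
  ext A
  simp [rank_toCLM]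

end RankTopology

/-- A representation of the doubled chain quiver `0 ⇄ 1 ⇄ 2 ⇄ ⋯` with `n i`-indexed column
vectors at node `i`: for `p : ChainRep K n`, the matrices `p.1 i` and `p.2 i` are the `α_i` and
`β_i` of the paper. -/
abbrev ChainRep (K : Type*) (n : ℕ → Type*) : Type _ :=
  (∀ i, Matrix (n (i + 1)) (n i) K) × (∀ i, Matrix (n i) (n (i + 1)) K)

namespace ChainRep

open Matrix

/-- The representation obtained by transposing all matrices, which exchanges the roles of `α`
and `β`. -/
def dual {K : Type*} {n : ℕ → Type*} (p : ChainRep K n) : ChainRep K n :=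
  (fun i ↦ (p.2 i)ᵀ, fun i ↦ (p.1 i)ᵀ)

section Algebra

variable {R : Type*} [CommRing R] {n : ℕ → Type*} [∀ i, Fintype (n i)] {m : ℕ}
  {p q : ChainRep R n}

/-- The moment map equations `α_j β_j = β_{j+1} α_{j+1}` at the nodes `1, …, m`. -/
def IsMomentZero (m : ℕ) (p : ChainRep R n) : Prop :=
  ∀ j < m, p.1 j * p.2 j = p.2 (j + 1) * p.1 (j + 1)

theorem IsMomentZero.dual (hp : IsMomentZero m p) : IsMomentZero m p.dual := fun j hj ↦ by
  simpa only [ChainRep.dual, transpose_mul] using congrArg transpose (hp j hj)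

/-- The representations that satisfy the moment map equations, have the same composite
`α_m β_m` and the same arrows beyond node `m + 1` as `p`, and all of whose matrices have at most
the rank of those of `p`. -/
def rankBoundedLocus (m : ℕ) (p : ChainRep R n) : Set (ChainRep R n) :=
  {q | IsMomentZero m q ∧ q.1 m * q.2 m = p.1 m * p.2 m ∧
    (∀ i, (q.1 i).rank ≤ (p.1 i).rank ∧ (q.2 i).rank ≤ (p.2 i).rank) ∧
    ∀ i, m + 1 ≤ i → q.1 i = p.1 i ∧ q.2 i = p.2 i}

variable [∀ i, DecidableEq (n i)]

/-- The orbit of `p` under `∏_{i ≤ m} GL (n i)`, acting with `g (m + 1) = 1` on the arrows between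
the nodes `0, …, m + 1` and leaving the other arrows unchanged. -/
def orbit (m : ℕ) (p : ChainRep R n) : Set (ChainRep R n) :=
  {q | ∃ g : ∀ i, GL (n i) R, g (m + 1) = 1 ∧
    (∀ i ≤ m,
      q.1 i = (g (i + 1)).val * p.1 i * ((g i)⁻¹).val ∧
      q.2 i = (g i).val * p.2 i * ((g (i + 1))⁻¹).val) ∧
    ∀ i, m + 1 ≤ i → q.1 i = p.1 i ∧ q.2 i = p.2 i}

theorem mem_orbit_iff_intertwining :
    q ∈ orbit m p ↔ ∃ g : ∀ i, GL (n i) R, g (m + 1) = 1 ∧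
      (∀ i ≤ m,
        q.1 i * (g i).val = (g (i + 1)).val * p.1 i ∧
        q.2 i * (g (i + 1)).val = (g i).val * p.2 i) ∧
      ∀ i, m + 1 ≤ i → q.1 i = p.1 i ∧ q.2 i = p.2 i := by
  simp only [orbit, Set.mem_ofPred_eq, eq_mul_coe_inv_iff]

theorem rank_eq_of_mem_orbit (hq : q ∈ orbit m p) (i : ℕ) :
    (q.1 i).rank = (p.1 i).rank ∧ (q.2 i).rank = (p.2 i).rank := by
  obtain ⟨g, -, conj, fixed⟩ := hq
  rcases le_or_gt i m with hi | hi
  · simp only [conj i hi, rank_conj, and_self]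
  · simp only [fixed i hi, and_self]

theorem dual_mem_orbit (hq : q ∈ orbit m p) : q.dual ∈ orbit m p.dual := by
  obtain ⟨g, g_last, conj, fixed⟩ := hq
  refine ⟨fun i ↦ contragredient (g i), ?_, fun i hi ↦ ?_, fun i hi ↦ ?_⟩
  · exact (congrArg contragredient g_last).trans contragredient_one
  · simp only [dual, conj i hi, transpose_mul, ← Matrix.mul_assoc]
    exact ⟨rfl, rfl⟩
  · simp only [dual, fixed i hi, and_self]

theorem orbit_dual : orbit m p.dual = dual ⁻¹' orbit m p :=
  Set.ext fun _ ↦ ⟨dual_mem_orbit, dual_mem_orbit⟩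

theorem IsMomentZero.of_mem_orbit (hp : IsMomentZero m p) (hq : q ∈ orbit m p) :
    IsMomentZero m q := fun j hj ↦ by
  obtain ⟨g, -, conj, -⟩ := mem_orbit_iff_intertwining.1 hq
  obtain ⟨hα, hβ⟩ := conj j hj.le
  obtain ⟨hα', hβ'⟩ := conj (j + 1) hj
  refine (g (j + 1)).isUnit.mul_right_cancel ?_
  rw [Matrix.mul_assoc, hβ, ← Matrix.mul_assoc, hα, Matrix.mul_assoc, hp j hj,
    Matrix.mul_assoc (q.2 _), hα', ← Matrix.mul_assoc (q.2 _), hβ', Matrix.mul_assoc]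

theorem fst_mul_snd_last_eq_of_mem_orbit (hq : q ∈ orbit m p) :
    q.1 m * q.2 m = p.1 m * p.2 m := by
  obtain ⟨g, g_last, conj, -⟩ := mem_orbit_iff_intertwining.1 hq
  obtain ⟨hα, hβ⟩ := conj m le_rfl
  simp only [g_last, Units.val_one, Matrix.mul_one, Matrix.one_mul] at hα hβ
  rw [hβ, ← Matrix.mul_assoc, hα]

theorem orbit_subset_rankBoundedLocus (hp : IsMomentZero m p) :
    orbit m p ⊆ rankBoundedLocus m p := fun _ hq ↦
  ⟨hp.of_mem_orbit hq, fst_mul_snd_last_eq_of_mem_orbit hq,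
    fun i ↦ (rank_eq_of_mem_orbit hq i).imp Eq.le Eq.le, hq.choose_spec.2.2⟩

/-- For idempotents `P i`, the family `t ↦ p + (t - 1) • (P p (1 - P))`. If `p` preserves the ranges
of the `P i`, then in block form it multiplies the component of each matrix from `ker P` to
`range P` by `t`, and at `t = 0` it is the associated graded of `p`. -/
def degeneration (p : ChainRep R n) (P : ∀ i, Matrix (n i) (n i) R) (t : R) : ChainRep R n :=
  (fun i ↦ p.1 i + (t - 1) • (P (i + 1) * p.1 i * (1 - P i)),
    fun i ↦ p.2 i + (t - 1) • (P i * p.2 i * (1 - P (i + 1))))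

theorem degeneration_mem_orbit {P : ∀ i, Matrix (n i) (n i) R}
    (hP : ∀ i, IsIdempotentElem (P i)) (hα : ∀ i, P (i + 1) * p.1 i * P i = p.1 i * P i)
    (hβ : ∀ i, P i * p.2 i * P (i + 1) = p.2 i * P (i + 1)) (hP_one : ∀ i, m < i → P i = 1)
    (t : Rˣ) : degeneration p P t ∈ orbit m p := by
  refine ⟨fun i ↦ idempotentScaling (P i) (hP i) t⁻¹,
    Units.ext (by simp [idempotentScaling, hP_one]), fun i _ ↦ ⟨?_, ?_⟩, fun i hi ↦ ?_⟩
  · exact (idempotentScaling_inv_mul_mul_inv _ _ (hα i) t).symm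
  · exact (idempotentScaling_inv_mul_mul_inv _ _ (hβ i) t).symm
  · simp [degeneration, hP_one i hi, hP_one (i + 1) (Nat.lt_succ_of_lt hi)]

end Algebra

section Splitting

variable {K : Type*} [Field K] {n : ℕ → Type*} [∀ i, Fintype (n i)] [∀ i, DecidableEq (n i)]
  {m : ℕ} {p q : ChainRep K n}

theorem exists_intertwining_of_rank_le {i : ℕ}
    (hp : IsCompl (p.1 i).mulVecLin.ker (p.2 i).mulVecLin.range)
    (hα : (q.1 i).rank ≤ (p.1 i).rank) (hβ : (q.2 i).rank ≤ (p.2 i).rank) (g : GL (n (i + 1)) K)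
    (hg : g.val * (p.1 i * p.2 i) = q.1 i * q.2 i * g.val) :
    ∃ h : GL (n i) K, q.1 i * h.val = g.val * p.1 i ∧ q.2 i * g.val = h.val * p.2 i := by
  have rank_mul : (q.1 i * q.2 i).rank = (p.1 i * p.2 i).rank := by
    rw [eq_mul_coe_inv_iff.2 hg.symm, rank_conj]
  have hq : IsCompl (q.1 i).mulVecLin.ker (q.2 i).mulVecLin.range := by
    obtain ⟨rank_mul_left, rank_mul_right⟩ := (isCompl_ker_range_iff_rank_mul _ _).1 hp
    have := rank_mul_le_left (q.1 i) (q.2 i)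
    have := rank_mul_le_right (q.1 i) (q.2 i)
    exact (isCompl_ker_range_iff_rank_mul _ _).2 ⟨by omega, by omega⟩
  obtain ⟨h, hα, hβ⟩ := exists_generalLinearGroup_intertwining hp hq g hg
  exact ⟨h, hα.symm, hβ.symm⟩

theorem rankBoundedLocus_subset_orbit (hp : IsMomentZero m p)
    (hc : ∀ i ≤ m, IsCompl (p.1 i).mulVecLin.ker (p.2 i).mulVecLin.range) :
    rankBoundedLocus m p ⊆ orbit m p := by
  rintro q ⟨hq, last, rank_le, fixed⟩
  suffices extend : ∀ k ≤ m + 1, ∃ g : ∀ i, GL (n i) K, g (m + 1) = 1 ∧ ∀ i, k ≤ i → i ≤ m →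
      q.1 i * (g i).val = (g (i + 1)).val * p.1 i ∧
      q.2 i * (g (i + 1)).val = (g i).val * p.2 i by
    obtain ⟨g, g_last, hg⟩ := extend 0 (Nat.zero_le _)
    exact mem_orbit_iff_intertwining.2 ⟨g, g_last, fun i ↦ hg i (Nat.zero_le _), fixed⟩
  intro k hk
  induction hk using Nat.decreasingInduction with
  | self => exact ⟨fun _ ↦ 1, rfl, fun i _ _ ↦ by omega⟩
  | of_succ k hk ih =>
    obtain ⟨g, g_last, hg⟩ := ih
    have intertwines : (g (k + 1)).val * (p.1 k * p.2 k) =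
        q.1 k * q.2 k * (g (k + 1)).val := by
      rcases (Nat.lt_succ_iff.1 hk).lt_or_eq with hkm | rfl
      · obtain ⟨hα, hβ⟩ := hg (k + 1) le_rfl hkm
        rw [hp k hkm, hq k hkm, ← Matrix.mul_assoc, ← hβ, Matrix.mul_assoc, ← hα, Matrix.mul_assoc]
      · simp only [g_last, last, Units.val_one, Matrix.one_mul, Matrix.mul_one]
    obtain ⟨h, hα, hβ⟩ := exists_intertwining_of_rank_le (hc k (by omega)) (rank_le k).1
      (rank_le k).2 (g (k + 1)) intertwines
    refine ⟨Function.update g k h, by rwa [Function.update_of_ne (by omega)], fun i hki him ↦ ?_⟩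
    rw [Function.update_of_ne (by omega : i + 1 ≠ k)]
    rcases hki.eq_or_lt with rfl | hki
    · rw [Function.update_self]
      exact ⟨hα, hβ⟩
    · rw [Function.update_of_ne hki.ne']
      exact hg i hki him

end Splitting

section Topology

theorem continuous_dual {K : Type*} [TopologicalSpace K] {n : ℕ → Type*} :
    Continuous (dual : ChainRep K n → ChainRep K n) := by
  unfold dual
  fun_prop

variable {K : Type*} [NontriviallyNormedField K] {n : ℕ → Type*} [∀ i, Fintype (n i)] {m : ℕ}
  {p : ChainRep K n}

theorem isClosed_rankBoundedLocus [CompleteSpace K] : IsClosed (rankBoundedLocus m p) := by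
  have cα (i : ℕ) : Continuous fun q : ChainRep K n ↦ q.1 i := by fun_prop
  have cβ (i : ℕ) : Continuous fun q : ChainRep K n ↦ q.2 i := by fun_prop
  simp only [rankBoundedLocus, IsMomentZero, Set.ofPred_and, Set.ofPred_forall]
  refine .inter (isClosed_iInter fun j ↦ isClosed_iInter fun _ ↦ ?_) (.inter ?_ (.inter
    (isClosed_iInter fun i ↦ .inter ?_ ?_) (isClosed_iInter fun i ↦ isClosed_iInter fun _ ↦
      .inter ?_ ?_)))
  · exact isClosed_eq ((cα j).matrix_mul (cβ j)) ((cβ _).matrix_mul (cα _))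
  · exact isClosed_eq ((cα m).matrix_mul (cβ m)) continuous_const
  · exact (isClosed_setOf_rank_le _).preimage (cα i)
  · exact (isClosed_setOf_rank_le _).preimage (cβ i)
  · exact isClosed_eq (cα i) continuous_const
  · exact isClosed_eq (cβ i) continuous_const

variable [∀ i, DecidableEq (n i)]

theorem degeneration_zero_mem_orbit (hclosed : IsClosed (orbit m p))
    {P : ∀ i, Matrix (n i) (n i) K}
    (hP : ∀ i, IsIdempotentElem (P i)) (hα : ∀ i, P (i + 1) * p.1 i * P i = p.1 i * P i)
    (hβ : ∀ i, P i * p.2 i * P (i + 1) = p.2 i * P (i + 1)) (hP_one : ∀ i, m < i → P i = 1) :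
    degeneration p P 0 ∈ orbit m p := by
  have cont : Continuous (degeneration p P) := by
    unfold degeneration
    fun_prop
  have nonzero_subset : ({0}ᶜ : Set K) ⊆ degeneration p P ⁻¹' orbit m p := fun t ht ↦
    degeneration_mem_orbit hP hα hβ hP_one (Units.mk0 t ht)
  exact (hclosed.preimage cont).closure_subset_iff.2 nonzero_subset (dense_compl_singleton 0 0)

theorem rank_mul_eq_left_of_isClosed_orbit (hp : IsMomentZero m p)
    (hclosed : IsClosed (orbit m p)) {j : ℕ} (hj : j ≤ m) :
    (p.1 j * p.2 j).rank = (p.1 j).rank := by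
  choose S hS using fun i ↦ exists_mul_mul_self_eq (p.2 i)
  let P (i : ℕ) : Matrix (n i) (n i) K := if i ≤ j then p.2 i * S i else 1
  have P_of_le {i : ℕ} (hi : i ≤ j) : P i = p.2 i * S i := if_pos hi
  have P_of_lt {i : ℕ} (hi : j < i) : P i = 1 := if_neg hi.not_ge
  have P_mul_snd (i : ℕ) : P i * p.2 i = p.2 i := by
    rcases le_or_gt i j with hi | hi
    · rw [P_of_le hi, hS]
    · rw [P_of_lt hi, Matrix.one_mul]
  have idempotent (i : ℕ) : IsIdempotentElem (P i) := by
    rcases le_or_gt i j with hi | hi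
    · rw [IsIdempotentElem]
      nth_rw 2 3 [P_of_le hi]
      rw [← Matrix.mul_assoc, P_mul_snd]
    · rw [P_of_lt hi]
      exact .one
  have fst_stable (i : ℕ) : P (i + 1) * p.1 i * P i = p.1 i * P i := by
    rcases lt_or_ge i j with hi | hi
    · have moment := hp i (by omega)
      rw [P_of_le hi.le, Matrix.mul_assoc, ← Matrix.mul_assoc (p.1 i), moment,
        ← Matrix.mul_assoc, ← Matrix.mul_assoc (P _), P_mul_snd]
    · rw [P_of_lt (by omega : j < i + 1), Matrix.one_mul]
  have limit_mem := degeneration_zero_mem_orbit hclosed idempotent fst_stable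
    (fun i ↦ by rw [P_mul_snd]) (fun i hi ↦ P_of_lt (by omega))
  have limit_fst : (degeneration p P 0).1 j = p.1 j * p.2 j * S j := by
    simp [degeneration, P_of_le le_rfl, P_of_lt (Nat.lt_succ_self j), Matrix.mul_sub,
      Matrix.mul_assoc]
  refine (rank_mul_le_left _ _).antisymm ?_
  calc (p.1 j).rank = (p.1 j * p.2 j * S j).rank := by
        rw [← limit_fst, (rank_eq_of_mem_orbit limit_mem j).1]
    _ ≤ (p.1 j * p.2 j).rank := rank_mul_le_left _ _

theorem rank_mul_eq_right_of_isClosed_orbit (hp : IsMomentZero m p)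
    (hclosed : IsClosed (orbit m p)) {j : ℕ} (hj : j ≤ m) :
    (p.1 j * p.2 j).rank = (p.2 j).rank := by
  have hclosed_dual : IsClosed (orbit m p.dual) := by
    rw [orbit_dual]
    exact hclosed.preimage continuous_dual
  simpa only [dual, ← transpose_mul, rank_transpose] using
    rank_mul_eq_left_of_isClosed_orbit hp.dual hclosed_dual hj

end Topology

end ChainRep

open ChainRep in
theorem statement14_general {K : Type*} [NontriviallyNormedField K] [CompleteSpace K]
    {n : ℕ → Type*} [∀ i, Fintype (n i)] [∀ i, DecidableEq (n i)] {m : ℕ} {p : ChainRep K n}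
    (hp : IsMomentZero m p) :
    IsClosed (orbit m p) ↔
      ∀ i ≤ m, IsCompl (p.1 i).mulVecLin.ker (p.2 i).mulVecLin.range := by
  constructor
  · exact fun hclosed i hi ↦ (isCompl_ker_range_iff_rank_mul _ _).2
      ⟨rank_mul_eq_left_of_isClosed_orbit hp hclosed hi,
        rank_mul_eq_right_of_isClosed_orbit hp hclosed hi⟩
  · intro hc
    rw [(orbit_subset_rankBoundedLocus hp).antisymm (rankBoundedLocus_subset_orbit hp hc)]
    exact isClosed_rankBoundedLocus

/-- (Here the paper's `r` is `m + 1`, so `r ≥ 2` is `1 ≤ m`;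
the quiver maps are `α i : ℂ^(dims i) → ℂ^(dims (i+1))` and
`β i : ℂ^(dims (i+1)) → ℂ^(dims i)` for `i = 0, …, m`, with `dims 0 = 0`.
The complex moment map equations at level zero for `∏ GL(dims i, ℂ)` read
`α_j β_j = β_{j+1} α_{j+1}` for `j < m`.  The group element acts with
`g_{m+1} = 1`, and components of index `> m` are unaffected.)

The orbit of `(α, β)` under `∏_{i=1}^{m} GL(dims i, ℂ)` is closed in the
product matrix space if and only if, for every `i = 1, …, m`, the space
`ℂ^(dims i)` is the internal direct sum of `ker α_i` and `range β_i`. -/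
theorem statement14 (m : ℕ) (hm : 1 ≤ m) (dims : ℕ → ℕ) (h0 : dims 0 = 0)
    (hmono : ∀ i ≤ m, dims i ≤ dims (i+1))
    (α : ∀ i : ℕ, Matrix (Fin (dims (i+1))) (Fin (dims i)) ℂ)
    (β : ∀ i : ℕ, Matrix (Fin (dims i)) (Fin (dims (i+1))) ℂ)
    (hmm0 : ∀ j < m, α j * β j = β (j+1) * α (j+1)) :
    IsClosed {q : (∀ i : ℕ, Matrix (Fin (dims (i+1))) (Fin (dims i)) ℂ) ×
          (∀ i : ℕ, Matrix (Fin (dims i)) (Fin (dims (i+1))) ℂ) |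
        ∃ g : ∀ i : ℕ, Matrix.GeneralLinearGroup (Fin (dims i)) ℂ,
          g (m+1) = 1 ∧
          (∀ i ≤ m, q.1 i = glActA dims g α i ∧ q.2 i = glActB dims g β i) ∧
          (∀ i, m + 1 ≤ i → q.1 i = α i ∧ q.2 i = β i)} ↔
      ∀ i, 1 ≤ i → i ≤ m →
        IsCompl (LinearMap.ker (α i).mulVecLin) (LinearMap.range (β i).mulVecLin) := by
  have node_zero : IsCompl (LinearMap.ker (α 0).mulVecLin) (LinearMap.range (β 0).mulVecLin) := by
    have : IsEmpty (Fin (dims 0)) := by rw [h0]; infer_instance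
    exact ⟨disjoint_iff.2 (Subsingleton.elim _ _), codisjoint_iff.2 (Subsingleton.elim _ _)⟩
  refine (statement14_general (n := fun i ↦ Fin (dims i)) (p := (α, β)) hmm0).trans
    ⟨fun h i _ ↦ h i, fun h i hi ↦ ?_⟩
  exact i.eq_zero_or_pos.elim (fun hi0 ↦ hi0 ▸ node_zero) fun hpos ↦ h i hpos hi
end

section
/- Let D be a diagonal n×n complex matrix. (1) Surjectivity: every n×n complex matrix X whose characteristic polynomial equals the characteristic polynomial of D is similar to D + N for some strictly upper triangular matrix N, i.e., X = Q (D + N) Q⁻¹ for some Q ∈ GL(n,ℂ). (2) Injectivity over regular elements: if N, N' are strictly upper triangular, g ∈ GL(n,ℂ) satisfies g (D + N) g⁻¹ = D + N', and D + N is regular (its minimal polynomial equals its characteristic polynomial), then g is upper triangular. -/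
/-!
Surjectivity: if `μ` is a root of the characteristic polynomial of an endomorphism `f` of `V`, then
`μ - f` is not surjective, and any hyperplane `H` containing its range is `f`-invariant with `f`
acting on `V ⧸ H` as `μ`. Splitting off the diagonal entries of `D` in this way, from last to first,
conjugates any `X` with the characteristic polynomial of `D` to an upper triangular matrix with the
same diagonal as `D`.

Injectivity: if `f` is regular, then `ker p(f)` has dimension at most `deg p`, so by Cayley–Hamilton
an `f`-invariant subspace `W` is the kernel of `χ(f)`, where `χ` is the characteristic polynomial of
`f` on `W`. An intertwiner into a regular endomorphism therefore carries invariant subspaces to the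
invariant subspaces with the same characteristic polynomial, and for upper triangular matrices with
equal diagonals it must preserve the standard flag. Regularity is assumed of the source `D + N` of
`g`, so this is applied to `g⁻¹`.
-/

open Polynomial Module Matrix

section Triangularization

section

variable {R M : Type*} [CommRing R] [AddCommGroup M] [Module R M]

theorem exists_toMatrix_sumQuot_eq_fromBlocks {m n : Type*} [Fintype m] [Fintype n]
    [DecidableEq m] [DecidableEq n] {W : Submodule R M} (bW : Basis m R W)
    (bQ : Basis n R (M ⧸ W)) {f : End R M} (hW : W ≤ W.comap f) :
    ∃ B, LinearMap.toMatrix (bW.sumQuot bQ) (bW.sumQuot bQ) f =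
      fromBlocks (LinearMap.toMatrix bW bW (f.restrict hW)) B 0
        (LinearMap.toMatrix bQ bQ (W.mapQ W f hW)) := by
  set b := bW.sumQuot bQ
  refine ⟨(LinearMap.toMatrix b b f).toBlocks₁₂, ?_⟩
  rw [← fromBlocks_toBlocks (LinearMap.toMatrix b b f)]
  congr 1 <;> ext i j
  · simp only [toBlocks₁₁, of_apply, LinearMap.toMatrix_apply, b, Basis.sumQuot_inl]
    exact Basis.sumQuot_repr_inl_of_mem bW bQ _ (hW (bW j).2) i
  · simp only [toBlocks₂₁, of_apply, LinearMap.toMatrix_apply, b, Basis.sumQuot_inl]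
    exact Basis.sumQuot_repr_inr_of_mem bW bQ _ (hW (bW j).2) i
  · simp only [toBlocks₂₂, of_apply, LinearMap.toMatrix_apply, b, Basis.sumQuot_repr_inr,
      ← Basis.sumQuot_inr bW bQ j, Submodule.mapQ_apply, Submodule.mkQ_apply]

theorem charpoly_eq_charpoly_restrict_mul_charpoly_mapQ [Module.Finite R M] [Free R M]
    {W : Submodule R M} [Free R W] [Module.Finite R W] [Free R (M ⧸ W)] {f : End R M}
    (hW : W ≤ W.comap f) :
    f.charpoly = (f.restrict hW).charpoly * (W.mapQ W f hW).charpoly := by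
  let bW := Free.chooseBasis R W
  let bQ := Free.chooseBasis R (M ⧸ W)
  obtain ⟨B, hB⟩ := exists_toMatrix_sumQuot_eq_fromBlocks bW bQ hW
  rw [← f.charpoly_toMatrix (bW.sumQuot bQ), hB, charpoly_fromBlocks_zero₂₁,
    LinearMap.charpoly_toMatrix, LinearMap.charpoly_toMatrix]

end

theorem isUpperTriangular_reindex_fromBlocks_zero₂₁ {R : Type*} [Zero R] {m n : ℕ}
    {A : Matrix (Fin m) (Fin m) R} {D : Matrix (Fin n) (Fin n) R} (hA : A.IsUpperTriangular)
    (hD : D.IsUpperTriangular) (B : Matrix (Fin m) (Fin n) R) :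
    (reindex finSumFinEquiv finSumFinEquiv (fromBlocks A B 0 D)).IsUpperTriangular := by
  rw [IsUpperTriangular, blockTriangular_reindex_iff]
  rintro (i | i) (j | j) hij
  · exact hA ((Fin.strictMono_castAdd n).lt_iff_lt.mp (by simpa using hij))
  · have hij : (j : ℕ) + m < i := by simpa [Fin.lt_def, add_comm] using hij
    omega
  · rfl
  · exact hD (by simpa using hij)

variable {K V : Type*} [Field K] [AddCommGroup V] [Module K V] [FiniteDimensional K V]

theorem exists_invariant_hyperplane_of_isRoot_charpoly {f : End K V} {μ : K}
    (hμ : f.charpoly.IsRoot μ) : ∃ (H : Submodule K V) (hH : H ≤ H.comap f),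
      finrank K (V ⧸ H) = 1 ∧ H.mapQ H f hH = algebraMap K (End K (V ⧸ H)) μ := by
  have hrange : (algebraMap K (End K V) μ - f).range ≠ ⊤ := by
    rw [Ne, ← LinearMap.isUnit_iff_range_eq_top]
    exact (End.mem_spectrum_iff_isRoot_charpoly f μ).mpr hμ
  obtain ⟨φ, hφ, hle⟩ := Submodule.exists_le_ker_of_lt_top _ hrange.lt_top
  have hφf : ∀ v, φ (f v) = μ * φ v := fun v => by
    have : φ (μ • v - f v) = 0 := hle ⟨v, rfl⟩
    rw [map_sub, map_smul, smul_eq_mul, sub_eq_zero] at this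
    exact this.symm
  refine ⟨φ.ker, fun v hv => ?_, ?_, ?_⟩
  · rw [Submodule.mem_comap, LinearMap.mem_ker, hφf, LinearMap.mem_ker.mp hv, mul_zero]
  · have := Dual.finrank_ker_add_one_of_ne_zero hφ
    have := φ.ker.finrank_quotient_add_finrank
    omega
  · ext v
    refine (Submodule.Quotient.eq _).mpr ?_
    simp [hφf]

theorem exists_basis_toMatrix_isUpperTriangular {n : ℕ} {f : End K V} {d : Fin n → K}
    (hf : f.charpoly = ∏ i, (X - C (d i))) :
    ∃ b : Basis (Fin n) K V, (LinearMap.toMatrix b b f).IsUpperTriangular ∧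
      ∀ i, LinearMap.toMatrix b b f i i = d i := by
  induction n generalizing V with
  | zero =>
    have hV : finrank K V = 0 := by
      rw [← f.charpoly_natDegree, hf, Fin.prod_univ_zero, natDegree_one]
    exact ⟨finBasisOfFinrankEq K V hV, fun i => i.elim0, fun i => i.elim0⟩
  | succ n ih =>
    rw [Fin.prod_univ_castSucc] at hf
    obtain ⟨H, hH, hdim, hmapQ⟩ := exists_invariant_hyperplane_of_isRoot_charpoly
      (f := f) (μ := d (Fin.last n)) (by simp [hf])
    let bQ := finBasisOfFinrankEq K (V ⧸ H) hdim
    have hbQ : LinearMap.toMatrix bQ bQ (H.mapQ H f hH) = diagonal fun _ => d (Fin.last n) := by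
      rw [hmapQ, LinearMap.toMatrix_algebraMap, scalar_apply]
    have hrestrict : (f.restrict hH).charpoly = ∏ i : Fin n, (X - C (d i.castSucc)) := by
      have := charpoly_eq_charpoly_restrict_mul_charpoly_mapQ hH
      rw [hf, ← (H.mapQ H f hH).charpoly_toMatrix bQ, hbQ, charpoly_diagonal,
        Fin.prod_univ_one] at this
      exact (mul_right_cancel₀ (X_sub_C_ne_zero _) this).symm
    obtain ⟨bH, hbH, hdiag⟩ := ih hrestrict
    obtain ⟨B, hB⟩ := exists_toMatrix_sumQuot_eq_fromBlocks bH bQ hH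
    let b := (bH.sumQuot bQ).reindex finSumFinEquiv
    have hb : LinearMap.toMatrix b b f = reindex finSumFinEquiv finSumFinEquiv
        (fromBlocks (LinearMap.toMatrix bH bH (f.restrict hH)) B 0
          (diagonal fun _ => d (Fin.last n))) := by
      rw [← hbQ, ← hB]
      ext i j
      simp [b, LinearMap.toMatrix_apply]
    refine ⟨b, ?_, fun i => ?_⟩
    · rw [hb]
      exact isUpperTriangular_reindex_fromBlocks_zero₂₁ hbH (blockTriangular_diagonal _) B
    · rw [hb]
      cases i using Fin.lastCases with
      | last => simp
      | cast i => simpa using hdiag i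

theorem exists_eq_mul_isUpperTriangular_mul_inv {n : ℕ} {A : Matrix (Fin n) (Fin n) K}
    {d : Fin n → K} (hA : A.charpoly = ∏ i, (X - C (d i))) :
    ∃ (T : Matrix (Fin n) (Fin n) K) (Q : GL (Fin n) K), T.IsUpperTriangular ∧
      (∀ i, T i i = d i) ∧ A = Q * T * (Q⁻¹ : GL (Fin n) K) := by
  rw [← charpoly_toLin'] at hA
  obtain ⟨b, hb, hd⟩ := exists_basis_toMatrix_isUpperTriangular hA
  let e := Pi.basisFun K (Fin n)
  refine ⟨_, ⟨e.toMatrix b, b.toMatrix e, e.toMatrix_mul_toMatrix_flip b,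
    b.toMatrix_mul_toMatrix_flip e⟩, hb, hd, ?_⟩
  calc A = LinearMap.toMatrix e e A.toLin' := (LinearMap.toMatrix'_toLin' A).symm
    _ = e.toMatrix b * LinearMap.toMatrix b b A.toLin' * b.toMatrix e :=
      (basis_toMatrix_mul_linearMap_toMatrix_mul_basis_toMatrix e b e b A.toLin').symm

end Triangularization

section Intertwiners

theorem aeval_comp_of_comp_eq {R M N : Type*} [CommRing R] [AddCommGroup M] [Module R M]
    [AddCommGroup N] [Module R N] {f : End R M} {g : End R N} {φ : M →ₗ[R] N}
    (h : g ∘ₗ φ = φ ∘ₗ f) (p : R[X]) : aeval g p ∘ₗ φ = φ ∘ₗ aeval f p := by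
  induction p using Polynomial.induction_on' with
  | add p q hp hq => simp only [map_add, LinearMap.add_comp, LinearMap.comp_add, hp, hq]
  | monomial k a =>
    simp only [aeval_monomial, Algebra.algebraMap_eq_smul_one, smul_mul_assoc, one_mul,
      LinearMap.smul_comp, LinearMap.comp_smul, End.commute_pow_left_of_commute h k]

variable {K U U' V V' : Type*} [Field K]
  [AddCommGroup U] [Module K U] [FiniteDimensional K U]
  [AddCommGroup U'] [Module K U'] [FiniteDimensional K U']
  [AddCommGroup V] [Module K V]
  [AddCommGroup V'] [Module K V'] [FiniteDimensional K V']

theorem aeval_charpoly_comp_eq_zero {h : End K U} {f : End K V} {ι : U →ₗ[K] V}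
    (hι : f ∘ₗ ι = ι ∘ₗ h) : aeval f h.charpoly ∘ₗ ι = 0 := by
  rw [aeval_comp_of_comp_eq hι, LinearMap.aeval_self_charpoly, LinearMap.comp_zero]

theorem finrank_ker_aeval_le_natDegree [FiniteDimensional K V] {f : End K V}
    (hf : minpoly K f = f.charpoly) {p : K[X]} (hp : p ≠ 0) :
    finrank K (aeval f p).ker ≤ p.natDegree := by
  have hrange : ∀ v ∈ (aeval f p).range, f v ∈ (aeval f p).range := by
    rintro _ ⟨v, rfl⟩
    exact ⟨f v, LinearMap.congr_fun (aeval_comp_of_comp_eq (φ := f) rfl p) v⟩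
  set q := (f.restrict hrange).charpoly with hq
  have hq0 : q ≠ 0 := (f.restrict hrange).charpoly_monic.ne_zero
  have hqp : aeval f (q * p) = 0 := by
    have hq_range : aeval f q ∘ₗ (aeval f p).range.subtype = 0 :=
      aeval_charpoly_comp_eq_zero (f.subtype_comp_restrict hrange).symm
    ext v
    rw [map_mul, End.mul_apply]
    exact LinearMap.congr_fun hq_range ⟨aeval f p v, v, rfl⟩
  have hdim : finrank K V ≤ finrank K (aeval f p).range + p.natDegree := by
    rw [← f.charpoly_natDegree, ← hf, ← (f.restrict hrange).charpoly_natDegree, ← hq,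
      ← natDegree_mul hq0 hp]
    exact natDegree_le_of_dvd (minpoly.dvd K f hqp) (mul_ne_zero hq0 hp)
  have := (aeval f p).finrank_range_add_finrank_ker
  omega

theorem range_eq_ker_aeval_charpoly [FiniteDimensional K V] {h : End K U} {f : End K V}
    (hf : minpoly K f = f.charpoly) {ι : U →ₗ[K] V} (hι : f ∘ₗ ι = ι ∘ₗ h)
    (hinj : Function.Injective ι) : ι.range = (aeval f h.charpoly).ker := by
  refine Submodule.eq_of_le_of_finrank_le ?_ ?_
  · exact LinearMap.range_le_ker_iff.mpr (aeval_charpoly_comp_eq_zero hι)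
  · rw [LinearMap.finrank_range_of_inj hinj, ← h.charpoly_natDegree]
    exact finrank_ker_aeval_le_natDegree hf h.charpoly_monic.ne_zero

theorem range_comp_le_range_of_charpoly_eq {f : End K V} {f' : End K V'}
    {h : End K U} {h' : End K U'} {ι : U →ₗ[K] V} {ι' : U' →ₗ[K] V'} {φ : V →ₗ[K] V'}
    (hf' : minpoly K f' = f'.charpoly) (hι : f ∘ₗ ι = ι ∘ₗ h) (hι' : f' ∘ₗ ι' = ι' ∘ₗ h')
    (hinj : Function.Injective ι') (hφ : f' ∘ₗ φ = φ ∘ₗ f) (hh : h.charpoly = h'.charpoly) :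
    (φ ∘ₗ ι).range ≤ ι'.range := by
  have hφι : f' ∘ₗ (φ ∘ₗ ι) = (φ ∘ₗ ι) ∘ₗ h := by
    rw [← LinearMap.comp_assoc, hφ, LinearMap.comp_assoc, hι, LinearMap.comp_assoc]
  rw [range_eq_ker_aeval_charpoly hf' hι' hinj, ← hh]
  exact LinearMap.range_le_ker_iff.mpr (aeval_charpoly_comp_eq_zero hφι)

end Intertwiners

section UpperTriangularIntertwiners

variable {R K n : Type*}

theorem extendByZero_val_single [Semiring R] [DecidableEq n] {p : n → Prop} (j : {i // p i})
    (a : R) :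
    Function.ExtendByZero.linearMap R Subtype.val (Pi.single j a) = Pi.single (j : n) a := by
  ext i
  rw [Function.ExtendByZero.linearMap_apply]
  by_cases hi : p i
  · rw [Function.extend_val_apply hi]
    simp only [Pi.single_apply, Subtype.ext_iff]
  · have hij : i ≠ j := fun h => hi (h ▸ j.2)
    rw [Function.extend_val_apply' hi, Pi.single_eq_of_ne hij, Pi.zero_apply]

theorem toLin'_comp_extendByZero [CommRing R] [Fintype n] [DecidableEq n] {A : Matrix n n R}
    {p : n → Prop} [DecidablePred p] (hA : ∀ i j, ¬ p i → p j → A i j = 0) :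
    A.toLin' ∘ₗ Function.ExtendByZero.linearMap R (Subtype.val : {i // p i} → n) =
      Function.ExtendByZero.linearMap R Subtype.val ∘ₗ (A.toSquareBlockProp p).toLin' := by
  ext j i
  simp only [LinearMap.comp_apply, LinearMap.coe_single, extendByZero_val_single, toLin'_apply,
    mulVec_single_one, Function.ExtendByZero.linearMap_apply, col_apply]
  by_cases hi : p i
  · simp only [Function.extend_val_apply hi, col_apply, toSquareBlockProp_def, of_apply]
  · simp only [Function.extend_val_apply' hi, Pi.zero_apply, hA i j hi j.2]

theorem charpoly_toSquareBlockProp_of_isUpperTriangular [CommRing R] [Fintype n] [LinearOrder n]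
    {A : Matrix n n R} (hA : A.IsUpperTriangular) (p : n → Prop) [DecidablePred p] :
    (A.toSquareBlockProp p).charpoly = ∏ i : {i // p i}, (X - C (A i i)) :=
  charpoly_of_isUpperTriangular _ hA.submatrix

variable [Field K] [Fintype n] [LinearOrder n]

theorem isUpperTriangular_of_mul_eq_mul {A B Q : Matrix n n K} (hA : A.IsUpperTriangular)
    (hB : B.IsUpperTriangular) (hdiag : ∀ i, A i i = B i i) (hmin : minpoly K B = B.charpoly)
    (hQ : Q * A = B * Q) : Q.IsUpperTriangular := by
  intro i j hji
  let ι := Function.ExtendByZero.linearMap K (Subtype.val : {i // i ≤ j} → n)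
  have hι {M : Matrix n n K} (hM : M.IsUpperTriangular) :
      M.toLin' ∘ₗ ι = ι ∘ₗ (M.toSquareBlockProp (· ≤ j)).toLin' :=
    toLin'_comp_extendByZero fun _ _ hk hl => hM (hl.trans_lt (not_le.mp hk))
  have hcharpoly : (A.toSquareBlockProp (· ≤ j)).toLin'.charpoly =
      (B.toSquareBlockProp (· ≤ j)).toLin'.charpoly := by
    simp only [charpoly_toLin', charpoly_toSquareBlockProp_of_isUpperTriangular hA,
      charpoly_toSquareBlockProp_of_isUpperTriangular hB, hdiag]
  have hrange : (Q.toLin' ∘ₗ ι).range ≤ ι.range :=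
    range_comp_le_range_of_charpoly_eq (by rw [minpoly_toLin', charpoly_toLin', hmin])
      (hι hA) (hι hB) (Function.extend_injective Subtype.val_injective _)
      (by rw [← toLin'_mul, ← toLin'_mul, hQ]) hcharpoly
  obtain ⟨w, hw⟩ : Q.toLin' (ι (Pi.single ⟨j, le_rfl⟩ 1)) ∈ ι.range := hrange ⟨_, rfl⟩
  rw [extendByZero_val_single, toLin'_apply, mulVec_single_one] at hw
  calc Q i j = ι w i := (congr_fun hw i).symm
    _ = 0 := Function.extend_val_apply' (not_le.mpr hji)

theorem isUpperTriangular_of_conj_eq {A B : Matrix n n K} {g : GL n K}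
    (hA : A.IsUpperTriangular) (hB : B.IsUpperTriangular) (hdiag : ∀ i, A i i = B i i)
    (hmin : minpoly K A = A.charpoly) (hg : (g : Matrix n n K) * A * (g⁻¹ : GL n K) = B) :
    (g : Matrix n n K).IsUpperTriangular := by
  have hinter : (g⁻¹ : GL n K) * B = A * (g⁻¹ : GL n K) := by
    rw [← hg, ← mul_assoc, Units.inv_mul_cancel_left]
  have hinv : (g⁻¹ : GL n K).1.IsUpperTriangular :=
    isUpperTriangular_of_mul_eq_mul hB hA (fun i => (hdiag i).symm) hmin hinter
  have := (g⁻¹).isUnit.invertible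
  simpa using blockTriangular_inv_of_blockTriangular hinv

end UpperTriangularIntertwiners

theorem statement16_general {K : Type*} [Field K] {n : ℕ} {D : Matrix (Fin n) (Fin n) K}
    (hD : D.IsUpperTriangular) :
    (∀ X : Matrix (Fin n) (Fin n) K, X.charpoly = D.charpoly →
      ∃ (N : Matrix (Fin n) (Fin n) K) (Q : GL (Fin n) K),
        (∀ i j : Fin n, j ≤ i → N i j = 0) ∧ X = Q * (D + N) * (Q⁻¹ : GL (Fin n) K)) ∧
    (∀ (N N' : Matrix (Fin n) (Fin n) K) (g : GL (Fin n) K),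
      (∀ i j : Fin n, j ≤ i → N i j = 0) →
      (∀ i j : Fin n, j ≤ i → N' i j = 0) →
      g * (D + N) * (g⁻¹ : GL (Fin n) K) = D + N' →
      minpoly K (D + N) = (D + N).charpoly →
      (g : Matrix (Fin n) (Fin n) K).IsUpperTriangular) := by
  refine ⟨fun X hX => ?_, fun N N' g hN hN' hconj hmin => ?_⟩
  · rw [charpoly_of_isUpperTriangular D hD] at hX
    obtain ⟨T, Q, hT, hdiag, hX⟩ := exists_eq_mul_isUpperTriangular_mul_inv hX
    refine ⟨T - D, Q, fun i j hji => ?_, by rwa [add_sub_cancel]⟩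
    obtain rfl | hji := hji.eq_or_lt
    · rw [Matrix.sub_apply, hdiag, sub_self]
    · exact hT.sub hD hji
  · refine isUpperTriangular_of_conj_eq (hD.add fun i j hji => hN i j hji.le)
      (hD.add fun i j hji => hN' i j hji.le) (fun i => ?_) hmin hconj
    rw [Matrix.add_apply, Matrix.add_apply, hN i i le_rfl, hN' i i le_rfl]

/-- Let `D` be a diagonal `n × n` complex matrix.
(1) Surjectivity: every `n × n` complex matrix `X` whose characteristic
polynomial equals that of `D` can be written as `X = Q (D + N) Q⁻¹` with
`Q ∈ GL(n, ℂ)` and `N` strictly upper triangular.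
(2) Injectivity over regular elements: if `N, N'` are strictly upper
triangular, `g ∈ GL(n, ℂ)` satisfies `g (D + N) g⁻¹ = D + N'`, and `D + N` is
regular (its minimal polynomial equals its characteristic polynomial), then
`g` is upper triangular. -/
theorem statement16 (n : ℕ) (D : Matrix (Fin n) (Fin n) ℂ) (hD : D.IsDiag) :
    (∀ X : Matrix (Fin n) (Fin n) ℂ, X.charpoly = D.charpoly →
      ∃ (N : Matrix (Fin n) (Fin n) ℂ) (Q : Matrix.GeneralLinearGroup (Fin n) ℂ),
        (∀ i j : Fin n, j ≤ i → N i j = 0) ∧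
        X = (↑Q : Matrix (Fin n) (Fin n) ℂ) * (D + N) *
          (↑(Q⁻¹) : Matrix (Fin n) (Fin n) ℂ)) ∧
    (∀ (N N' : Matrix (Fin n) (Fin n) ℂ) (g : Matrix.GeneralLinearGroup (Fin n) ℂ),
      (∀ i j : Fin n, j ≤ i → N i j = 0) →
      (∀ i j : Fin n, j ≤ i → N' i j = 0) →
      (↑g : Matrix (Fin n) (Fin n) ℂ) * (D + N) *
          (↑(g⁻¹) : Matrix (Fin n) (Fin n) ℂ) = D + N' →
      minpoly ℂ (D + N) = (D + N).charpoly →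
      ∀ i j : Fin n, j < i → (↑g : Matrix (Fin n) (Fin n) ℂ) i j = 0) :=
  statement16_general fun _ _ hji => hD hji.ne'
end
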